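/- arXiv:2411.08765 — 2 statements merged into one kernel-verified Lean document; each statement's English description precedes it below -/
import Mathlib

section
/- For every n-qubit mixed state ρ and every Lagrangian subspace L ⊆ 𝔽₂^{2n}, there exists a stabilizer state |φ⟩ with Weyl(|φ⟩⟨φ|) = L such that ⟨φ|ρ|φ⟩ ≥ Σ_{x ∈ L} p_ρ(x). -/
open scoped BigOperators ComplexOrder

/-- The phase space `𝔽₂^{2n}`, written as pairs `(a, b)` with `a, b ∈ 𝔽₂ⁿ`. -/
abbrev PhaseSpace (n : ℕ) := (Fin n → ZMod 2) × (Fin n → ZMod 2)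

/-- The symplectic product `[x, y] = a·d + b·c` for `x = (a,b)`, `y = (c,d)`. -/
def sympl {n : ℕ} (x y : PhaseSpace n) : ZMod 2 :=
  ∑ i, x.1 i * y.2 i + ∑ i, x.2 i * y.1 i

/-- The symplectic Fourier transform `f̂(a) = 4^{-n} ∑_x (-1)^{[a,x]} f(x)`. -/
noncomputable def sft {n : ℕ} (f : PhaseSpace n → ℝ) (a : PhaseSpace n) : ℝ :=
  (1 / 4 ^ n) * ∑ x, (-1 : ℝ) ^ (sympl a x).val * f x

/-- The symplectic complement of a set `S ⊆ 𝔽₂^{2n}`. -/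
def symplComplement {n : ℕ} (S : Set (PhaseSpace n)) : Set (PhaseSpace n) :=
  {x | ∀ a ∈ S, sympl x a = 0}

/-- The Weyl operator `W_x = i^{a·b} X^a Z^b` for `x = (a,b)`, as a `2^n × 2^n` matrix
indexed by `𝔽₂ⁿ`: `(W_x)_{k,j} = i^{a·b} (-1)^{b·j} [k = j + a]`. -/
noncomputable def Weyl {n : ℕ} (x : PhaseSpace n) :
    Matrix (Fin n → ZMod 2) (Fin n → ZMod 2) ℂ :=
  fun k j => Complex.I ^ (∑ i, (x.1 i).val * (x.2 i).val) *
    (if k = j + x.1 then (-1 : ℂ) ^ (∑ i, (x.2 i).val * (j i).val) else 0)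

/-- `p_H(x) = 2^{-n} tr(W_x H)²` (the trace is real for Hermitian `H`). -/
noncomputable def pFun {n : ℕ} (H : Matrix (Fin n → ZMod 2) (Fin n → ZMod 2) ℂ)
    (x : PhaseSpace n) : ℝ :=
  ((Weyl x * H).trace.re) ^ 2 / 2 ^ n

/-- A set is Lagrangian if it equals its symplectic complement. -/
def IsLagrangian {n : ℕ} (S : Set (PhaseSpace n)) : Prop :=
  S = symplComplement S

/-- The outer product `|φ⟩⟨φ|` of a vector `φ ∈ ℂ^{2^n}`. -/
noncomputable def outer {n : ℕ} (φ : (Fin n → ZMod 2) → ℂ) :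
    Matrix (Fin n → ZMod 2) (Fin n → ZMod 2) ℂ :=
  Matrix.vecMulVec φ (fun j => starRingEnd ℂ (φ j))

/-- `Weyl(σ) = {x : tr(W_x σ) = ±1}`. -/
def weylSet {n : ℕ} (σ : Matrix (Fin n → ZMod 2) (Fin n → ZMod 2) ℂ) :
    Set (PhaseSpace n) :=
  {x | (Weyl x * σ).trace = 1 ∨ (Weyl x * σ).trace = -1}

/-- A unit vector `φ` is a stabilizer state iff `Weyl(|φ⟩⟨φ|)` is Lagrangian. -/
def IsStabilizerState {n : ℕ} (φ : (Fin n → ZMod 2) → ℂ) : Prop :=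
  (∑ j, Complex.normSq (φ j)) = 1 ∧ IsLagrangian (weylSet (outer φ))

/-- The stabilizer fidelity `F(ρ) = max_{stabilizer |φ⟩} ⟨φ|ρ|φ⟩ = max tr(ρ|φ⟩⟨φ|)`. -/
noncomputable def stabFidelity {n : ℕ}
    (ρ : Matrix (Fin n → ZMod 2) (Fin n → ZMod 2) ℂ) : ℝ :=
  ⨆ φ : {φ : (Fin n → ZMod 2) → ℂ // IsStabilizerState φ}, ((ρ * outer φ.1).trace).re


noncomputable def qch (z : ZMod 2) : ℝ := (-1) ^ z.val

theorem qch_add (u v : ZMod 2) : qch (u + v) = qch u * qch v := by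
  have : ∀ u v : ZMod 2, (u = 0 ∨ u = 1) ∧ (v = 0 ∨ v = 1) := by decide
  obtain ⟨h1, h2⟩ := this u v
  have h11 : (1 + 1 : ZMod 2) = 0 := by decide
  rcases h1 with rfl | rfl <;> rcases h2 with rfl | rfl <;> simp [qch, h11, ZMod.val_one]

theorem qch_zero : qch 0 = 1 := by simp [qch]

theorem qch_one : qch 1 = -1 := by simp [qch, ZMod.val_one]

theorem qch_cases (z : ZMod 2) : qch z = 1 ∨ qch z = -1 := by
  have : ∀ u : ZMod 2, (u = 0 ∨ u = 1) := by decide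
  rcases this z with rfl | rfl
  · exact Or.inl qch_zero
  · exact Or.inr qch_one

theorem qch_mul_self (z : ZMod 2) : qch z * qch z = 1 := by
  rcases qch_cases z with h | h <;> simp [h]

theorem qch_nat (N : ℕ) : qch (N : ZMod 2) = (-1) ^ N := by
  induction N with
  | zero => simp [qch_zero]
  | succ k ih => push_cast; rw [qch_add, ih, qch_one, pow_succ]

theorem qch_dot {n : ℕ} (b j : Fin n → ZMod 2) :
    (-1 : ℂ) ^ (∑ i, (b i).val * (j i).val) = (qch (b ⬝ᵥ j) : ℂ) := by
  have h : b ⬝ᵥ j = ((∑ i, (b i).val * (j i).val : ℕ) : ZMod 2) := by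
    push_cast
    simp [dotProduct]
  rw [h, qch_nat]
  push_cast
  rfl

noncomputable def qph {n : ℕ} (x : PhaseSpace n) : ℂ :=
  Complex.I ^ (∑ i, (x.1 i).val * (x.2 i).val)

theorem qph_sq {n : ℕ} (x : PhaseSpace n) : qph x * qph x = (qch (x.2 ⬝ᵥ x.1) : ℂ) := by
  rw [dotProduct_comm, ← qch_dot, qph, ← mul_pow, Complex.I_mul_I]

theorem qph_star {n : ℕ} (x : PhaseSpace n) :
    star (qph x) = (qch (x.2 ⬝ᵥ x.1) : ℂ) * qph x := by
  rw [dotProduct_comm, ← qch_dot, qph, ← mul_pow]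
  simp

theorem qtwo {n : ℕ} (a : Fin n → ZMod 2) : a + a = 0 := by
  funext i
  have : ∀ u : ZMod 2, u + u = 0 := by decide
  exact this _

theorem qaa {n : ℕ} (j a : Fin n → ZMod 2) : j + a + a = j := by
  rw [add_assoc, qtwo, add_zero]

theorem Weyl_apply {n : ℕ} (x : PhaseSpace n) (k j : Fin n → ZMod 2) :
    Weyl x k j = if k = j + x.1 then qph x * (qch (x.2 ⬝ᵥ j) : ℂ) else 0 := by
  rw [Weyl, qch_dot, mul_ite, mul_zero, qph]

theorem Weyl_mulVec {n : ℕ} (x : PhaseSpace n) (v : (Fin n → ZMod 2) → ℂ)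
    (k : Fin n → ZMod 2) :
    (Weyl x).mulVec v k = qph x * (qch (x.2 ⬝ᵥ (k + x.1)) : ℂ) * v (k + x.1) := by
  rw [Matrix.mulVec, dotProduct, Finset.sum_eq_single (k + x.1)]
  · rw [Weyl_apply, if_pos (by rw [qaa])]
  · intro j _ hj
    rw [Weyl_apply, if_neg, zero_mul]
    rintro rfl
    exact hj (qaa _ _).symm
  · simp

theorem Weyl_sq {n : ℕ} (x : PhaseSpace n) (v : (Fin n → ZMod 2) → ℂ) :
    (Weyl x).mulVec ((Weyl x).mulVec v) = v := by
  funext k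
  rw [Weyl_mulVec, Weyl_mulVec, qaa]
  have h := qph_sq x
  have h1 := qch_mul_self (x.2 ⬝ᵥ x.1)
  have h2 := qch_mul_self (x.2 ⬝ᵥ k)
  rw [dotProduct_add, qch_add]
  calc _ = (qph x * qph x) * ((qch (x.2 ⬝ᵥ x.1) : ℂ)) * ((qch (x.2 ⬝ᵥ k) * qch (x.2 ⬝ᵥ k) : ℝ) : ℂ) * v k := by
        push_cast; ring
    _ = ((qch (x.2 ⬝ᵥ x.1) * qch (x.2 ⬝ᵥ x.1) : ℝ) : ℂ) * ((qch (x.2 ⬝ᵥ k) * qch (x.2 ⬝ᵥ k) : ℝ) : ℂ) * v k := by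
        rw [h]; push_cast; ring
    _ = v k := by rw [h1, h2]; simp

theorem sympl_eq {n : ℕ} (x y : PhaseSpace n) : sympl x y = x.1 ⬝ᵥ y.2 + x.2 ⬝ᵥ y.1 := rfl

theorem sympl_comm {n : ℕ} (x y : PhaseSpace n) : sympl x y = sympl y x := by
  rw [sympl_eq, sympl_eq, add_comm, dotProduct_comm, dotProduct_comm x.1]

theorem Weyl_comm {n : ℕ} (x y : PhaseSpace n) (v : (Fin n → ZMod 2) → ℂ) :
    (Weyl x).mulVec ((Weyl y).mulVec v) =
      (qch (sympl x y) : ℂ) • (Weyl y).mulVec ((Weyl x).mulVec v) := by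
  funext k
  rw [Pi.smul_apply, Weyl_mulVec, Weyl_mulVec, Weyl_mulVec, Weyl_mulVec, sympl_eq,
    add_right_comm k y.1 x.1, dotProduct_comm x.1]
  simp only [dotProduct_add, qch_add, smul_eq_mul]
  have h1 := qch_mul_self (x.2 ⬝ᵥ y.1)
  have h1' : (qch (x.2 ⬝ᵥ y.1) : ℂ) ^ 2 = 1 := by rw [sq]; exact_mod_cast h1
  have h2 := qch_mul_self (y.2 ⬝ᵥ x.1)
  have h2' : (qch (y.2 ⬝ᵥ x.1) : ℂ) ^ 2 = 1 := by rw [sq]; exact_mod_cast h2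
  push_cast
  ring_nf
  simp only [h1', mul_one]

theorem Weyl_herm {n : ℕ} (x : PhaseSpace n) : (Weyl x).conjTranspose = Weyl x := by
  ext k j
  rw [Matrix.conjTranspose_apply, Weyl_apply, Weyl_apply]
  by_cases h : k = j + x.1
  · have h' : j = k + x.1 := by rw [h, qaa]
    rw [if_pos h, if_pos h', star_mul', qph_star, h, dotProduct_add, qch_add]
    have h1 := qch_mul_self (x.2 ⬝ᵥ x.1)
    have h1' : (qch (x.2 ⬝ᵥ x.1) : ℂ) ^ 2 = 1 := by rw [sq]; exact_mod_cast h1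
    have h3 : ∀ r : ℝ, star (r : ℂ) = r := fun r => Complex.conj_ofReal r
    rw [h3]
    push_cast
    linear_combination (qph x * (qch (x.2 ⬝ᵥ j) : ℂ)) * h1'
  · have h' : ¬ j = k + x.1 := by rintro rfl; exact h (qaa _ _).symm
    rw [if_neg h, if_neg h', star_zero]

theorem Weyl_adj {n : ℕ} (x : PhaseSpace n) (u v : (Fin n → ZMod 2) → ℂ) :
    star ((Weyl x).mulVec u) ⬝ᵥ v = star u ⬝ᵥ (Weyl x).mulVec v := by
  rw [Matrix.star_mulVec, Weyl_herm, Matrix.dotProduct_mulVec]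

theorem trace_outer {n : ℕ} (A : Matrix (Fin n → ZMod 2) (Fin n → ZMod 2) ℂ)
    (φ : (Fin n → ZMod 2) → ℂ) : (A * outer φ).trace = star φ ⬝ᵥ A.mulVec φ := by
  have : outer φ = Matrix.vecMulVec φ (star φ) := rfl
  rw [this, Matrix.mul_vecMulVec, Matrix.trace_vecMulVec, dotProduct_comm]

theorem qorth {n : ℕ} (c : Fin n → ZMod 2) :
    ∑ b : Fin n → ZMod 2, qch (b ⬝ᵥ c) = if c = 0 then 2 ^ n else 0 := by
  split_ifs with h
  · subst h
    simp [qch_zero]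
  · obtain ⟨i, hi⟩ : ∃ i, c i ≠ 0 := by
      by_contra hh
      push Not at hh
      exact h (funext hh)
    have hi1 : c i = 1 := by
      have : ∀ u : ZMod 2, u ≠ 0 → u = 1 := by decide
      exact this _ hi
    obtain ⟨e, hec⟩ : ∃ e : Fin n → ZMod 2, e ⬝ᵥ c = 1 :=
      ⟨Pi.single i 1, by rw [single_dotProduct, hi1, one_mul]⟩
    have key : ∑ b : Fin n → ZMod 2, qch (b ⬝ᵥ c) =
        ∑ b : Fin n → ZMod 2, qch ((b + e) ⬝ᵥ c) := by
      symm
      apply Fintype.sum_equiv (Equiv.addRight e)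
      intro b
      rw [Equiv.coe_addRight]
    have : ∀ b : Fin n → ZMod 2, qch ((b + e) ⬝ᵥ c) = - qch (b ⬝ᵥ c) := by
      intro b
      rw [add_dotProduct, qch_add, hec, qch_one]
      ring
    simp only [this, Finset.sum_neg_distrib] at key
    linarith

theorem qorth2 {n : ℕ} (x : PhaseSpace n) :
    ∑ a : PhaseSpace n, qch (sympl x a) = if x = 0 then 4 ^ n else 0 := by
  rw [Fintype.sum_prod_type]
  simp only [sympl_eq, qch_add]
  have : ∀ c : Fin n → ZMod 2, ∑ d : Fin n → ZMod 2, qch (x.1 ⬝ᵥ d) * qch (x.2 ⬝ᵥ c)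
      = (if x.1 = 0 then 2 ^ n else 0) * qch (c ⬝ᵥ x.2) := by
    intro c
    rw [← qorth, ← Finset.sum_mul, dotProduct_comm c]
    simp only [dotProduct_comm x.1]
  simp only [this]
  rw [← Finset.mul_sum, qorth]
  have h4 : (4 : ℝ) ^ n = 2 ^ n * 2 ^ n := by rw [← mul_pow]; norm_num
  rcases x with ⟨u, v⟩
  by_cases hu : u = 0 <;> by_cases hv : v = 0 <;> simp [hu, hv, h4, Prod.ext_iff]

theorem Weyl_trace {n : ℕ} (x : PhaseSpace n)
    (A : Matrix (Fin n → ZMod 2) (Fin n → ZMod 2) ℂ) :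
    (Weyl x * A).trace = ∑ j, qph x * (qch (x.2 ⬝ᵥ j) : ℂ) * A j (j + x.1) := by
  simp only [Matrix.trace, Matrix.diag_apply, Matrix.mul_apply, Weyl_apply]
  rw [Finset.sum_comm]
  refine Finset.sum_congr rfl fun j _ => ?_
  simp [ite_mul]

theorem Weyl_complete {n : ℕ} (A B : Matrix (Fin n → ZMod 2) (Fin n → ZMod 2) ℂ) :
    ∑ x : PhaseSpace n, (Weyl x * A).trace * (Weyl x * B).trace = 2 ^ n * (A * B).trace := by
  have e : ∀ (a b : Fin n → ZMod 2), (Weyl (a, b) * A).trace * (Weyl (a, b) * B).trace =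
      ∑ j, ∑ l, (qch (b ⬝ᵥ (j + l + a)) : ℂ) * (A j (j + a) * B l (l + a)) := by
    intro a b
    rw [Weyl_trace, Weyl_trace, Finset.sum_mul_sum]
    refine Finset.sum_congr rfl fun j _ => Finset.sum_congr rfl fun l _ => ?_
    have h := qph_sq (a, b)
    simp only [dotProduct_add, qch_add]
    push_cast
    dsimp only at h ⊢
    rw [← h]
    ring
  have o : ∀ c : Fin n → ZMod 2, ∑ b : Fin n → ZMod 2, (qch (b ⬝ᵥ c) : ℂ) =
      if c = 0 then 2 ^ n else 0 := by
    intro c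
    have := congrArg (fun r : ℝ => (r : ℂ)) (qorth c)
    rw [Complex.ofReal_sum] at this
    rw [this]
    split_ifs <;> simp
  rw [Fintype.sum_prod_type]
  have step : ∀ a : Fin n → ZMod 2,
      ∑ b : Fin n → ZMod 2, (Weyl (a, b) * A).trace * (Weyl (a, b) * B).trace =
      ∑ j, 2 ^ n * (A j (j + a) * B (j + a) j) := by
    intro a
    simp only [e]
    rw [Finset.sum_comm]
    refine Finset.sum_congr rfl fun j _ => ?_
    rw [Finset.sum_comm]
    rw [Finset.sum_eq_single (j + a)]
    · rw [← Finset.sum_mul, o, if_pos, qaa]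
      rw [add_right_comm, ← add_assoc, add_right_comm j a j, qtwo, zero_add, qtwo]
    · intro l _ hl
      rw [← Finset.sum_mul, o, if_neg, zero_mul]
      intro h
      apply hl
      have : (j + a) + l + l = l := by rw [add_right_comm j a l, h, zero_add]
      rw [qaa] at this
      exact this.symm
    · simp
  simp only [step]
  rw [Finset.sum_comm, Matrix.trace, Finset.mul_sum]
  refine Finset.sum_congr rfl fun j _ => ?_
  rw [← Finset.mul_sum, Matrix.diag_apply, Matrix.mul_apply]
  congr 1
  exact Equiv.sum_comp (Equiv.addLeft j) (fun k => A j k * B k j)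

theorem common_eig {n : ℕ} (L : Set (PhaseSpace n))
    (hL : ∀ x ∈ L, ∀ y ∈ L, sympl x y = 0) (S : Finset (PhaseSpace n)) :
    (∀ x ∈ S, x ∈ L) → ∃ v : (Fin n → ZMod 2) → ℂ, v ≠ 0 ∧
      ∀ x ∈ S, (Weyl x).mulVec v = v ∨ (Weyl x).mulVec v = -v := by
  classical
  induction S using Finset.induction_on with
  | empty => intro _; exact ⟨fun _ => 1, fun h => one_ne_zero (congrFun h 0), by simp⟩
  | insert y S hy ih =>
    intro hS
    obtain ⟨v, hv, hvS⟩ := ih fun x hx => hS x (Finset.mem_insert_of_mem hx)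
    have hyL := hS y (Finset.mem_insert_self _ _)
    have hc : ∀ x ∈ S, (Weyl x).mulVec ((Weyl y).mulVec v) =
        (Weyl y).mulVec ((Weyl x).mulVec v) := by
      intro x hx
      rw [Weyl_comm, hL x (hS x (Finset.mem_insert_of_mem hx)) y hyL, qch_zero]
      simp
    by_cases h : v + (Weyl y).mulVec v = 0
    · refine ⟨v, hv, fun x hx => ?_⟩
      rcases Finset.mem_insert.1 hx with rfl | hx
      · exact Or.inr (eq_neg_of_add_eq_zero_right h)
      · exact hvS x hx
    · refine ⟨_, h, fun x hx => ?_⟩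
      rcases Finset.mem_insert.1 hx with rfl | hx
      · left
        rw [Matrix.mulVec_add, Weyl_sq, add_comm]
      · rw [Matrix.mulVec_add, hc x hx]
        rcases hvS x hx with h1 | h1
        · left; rw [h1]
        · right; rw [h1, Matrix.mulVec_neg, neg_add]

theorem norm_eq {n : ℕ} (v : (Fin n → ZMod 2) → ℂ) :
    star v ⬝ᵥ v = ((∑ j, Complex.normSq (v j) : ℝ) : ℂ) := by
  simp [dotProduct, Complex.normSq_eq_conj_mul_self]

theorem stab_exp {n : ℕ} (L : Set (PhaseSpace n)) (hLag : IsLagrangian L)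
    (φ : (Fin n → ZMod 2) → ℂ) (hφ : star φ ⬝ᵥ φ = 1) (s : PhaseSpace n → ℝ)
    (hs : ∀ x ∈ L, s x = 1 ∨ s x = -1) (hs0 : ∀ x ∉ L, s x = 0)
    (he : ∀ x ∈ L, (Weyl x).mulVec φ = (s x : ℂ) • φ) (x : PhaseSpace n) :
    (Weyl x * outer φ).trace = s x := by
  rw [trace_outer]
  by_cases hx : x ∈ L
  · rw [he x hx, dotProduct_smul, hφ]; simp
  · rw [hs0 x hx]
    have : ∃ y ∈ L, sympl x y ≠ 0 := by
      by_contra hh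
      push Not at hh
      apply hx
      rw [hLag]
      exact hh
    obtain ⟨y, hy, hxy⟩ := this
    have h1 : sympl x y = 1 := by
      have : ∀ u : ZMod 2, u ≠ 0 → u = 1 := by decide
      exact this _ hxy
    have h2 := Weyl_comm x y φ
    rw [h1, qch_one, he y hy, Matrix.mulVec_smul] at h2
    have h3 := congrArg (fun w => star φ ⬝ᵥ w) h2
    simp only [dotProduct_smul] at h3
    rw [← Weyl_adj y, he y hy, star_smul, smul_dotProduct] at h3
    have h4 : star (s y : ℂ) = s y := Complex.conj_ofReal _
    rw [h4] at h3
    have h5 : (s y : ℂ) ≠ 0 := by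
      rcases hs y hy with h | h <;> simp [h]
    simp only [smul_eq_mul] at h3
    push_cast at h3
    have h6 : (s y : ℂ) * (star φ ⬝ᵥ (Weyl x).mulVec φ) = 0 := by linear_combination h3 / 2
    rcases mul_eq_zero.1 h6 with h | h
    · exact absurd h h5
    · rw [h]; simp

theorem stab_fin {n : ℕ} (L : Set (PhaseSpace n)) (hLag : IsLagrangian L)
    (φ : (Fin n → ZMod 2) → ℂ) (hφ : star φ ⬝ᵥ φ = 1) (s : PhaseSpace n → ℝ)
    (hs : ∀ x ∈ L, s x = 1 ∨ s x = -1) (hs0 : ∀ x ∉ L, s x = 0)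
    (he : ∀ x ∈ L, (Weyl x).mulVec φ = (s x : ℂ) • φ) :
    IsStabilizerState φ ∧ weylSet (outer φ) = L := by
  have hw : weylSet (outer φ) = L := by
    ext x
    simp only [weylSet, Set.mem_ofPred_eq, stab_exp L hLag φ hφ s hs hs0 he x]
    by_cases hx : x ∈ L
    · rcases hs x hx with h | h <;> simp [h, hx]
    · simp [hs0 x hx, hx]
  refine ⟨⟨?_, by rw [hw]; exact hLag⟩, hw⟩
  rw [norm_eq] at hφ
  exact_mod_cast hφ

theorem sympl_add_left {n : ℕ} (x y a : PhaseSpace n) :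
    sympl (x + y) a = sympl x a + sympl y a := by
  simp only [sympl_eq, Prod.fst_add, Prod.snd_add, add_dotProduct]
  ring

theorem Weyl_zero {n : ℕ} : Weyl (0 : PhaseSpace n) = 1 := by
  ext k j
  rw [Weyl_apply, Matrix.one_apply]
  simp [qph, qch_zero]

/-- For every n-qubit mixed state ρ and every Lagrangian subspace L,
there exists a stabilizer state |φ⟩ with Weyl(|φ⟩⟨φ|) = L such that
⟨φ|ρ|φ⟩ ≥ ∑_{x ∈ L} p_ρ(x). -/
theorem exists_stabilizer_fidelity_ge {n : ℕ}
    (ρ : Matrix (Fin n → ZMod 2) (Fin n → ZMod 2) ℂ)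
    (hρ : ρ.PosSemidef) (hτ : ρ.trace = 1)
    (L : Set (PhaseSpace n)) (hLag : IsLagrangian L) :
    ∃ φ : (Fin n → ZMod 2) → ℂ, IsStabilizerState φ ∧ weylSet (outer φ) = L ∧
      ((ρ * outer φ).trace).re ≥ ∑ x, L.indicator (pFun ρ) x := by
  classical
  have hL : ∀ x ∈ L, ∀ y ∈ L, sympl x y = 0 := by
    intro x hx y hy
    rw [hLag] at hx
    exact hx y hy
  have h0L : (0 : PhaseSpace n) ∈ L := by
    rw [hLag]
    intro a _
    simp [sympl]
  obtain ⟨v, hv, hve⟩ := common_eig L hL (Finset.univ.filter (· ∈ L)) (by simp)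
  have hve : ∀ x ∈ L, (Weyl x).mulVec v = v ∨ (Weyl x).mulVec v = -v :=
    fun x hx => hve x (by simp [hx])
  -- normalise
  set N : ℝ := ∑ j, Complex.normSq (v j) with hN
  have hNpos : 0 < N := by
    obtain ⟨j, hj⟩ : ∃ j, v j ≠ 0 := by
      by_contra hh
      push Not at hh
      exact hv (funext hh)
    exact Finset.sum_pos' (fun i _ => Complex.normSq_nonneg _)
      ⟨j, Finset.mem_univ _, Complex.normSq_pos.2 hj⟩
  obtain ⟨φ, hφ, hφe⟩ : ∃ φ : (Fin n → ZMod 2) → ℂ, star φ ⬝ᵥ φ = 1 ∧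
      ∀ x ∈ L, (Weyl x).mulVec φ = φ ∨ (Weyl x).mulVec φ = -φ := by
    refine ⟨(((Real.sqrt N)⁻¹ : ℝ) : ℂ) • v, ?_, ?_⟩
    · have h4 : star (((Real.sqrt N)⁻¹ : ℝ) : ℂ) = (((Real.sqrt N)⁻¹ : ℝ) : ℂ) :=
        Complex.conj_ofReal _
      rw [star_smul, smul_dotProduct, dotProduct_smul, norm_eq, ← hN, h4, smul_eq_mul, smul_eq_mul]
      have : (Real.sqrt N)⁻¹ * ((Real.sqrt N)⁻¹ * N) = 1 := by
        rw [← mul_assoc, ← mul_inv, Real.mul_self_sqrt hNpos.le, inv_mul_cancel₀ hNpos.ne']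
      exact_mod_cast this
    · intro x hx
      rw [Matrix.mulVec_smul]
      rcases hve x hx with h | h
      · left; rw [h]
      · right; rw [h, smul_neg]
  have hφ0 : φ ≠ 0 := by rintro rfl; simp at hφ
  let s : PhaseSpace n → ℝ := fun x =>
    if x ∈ L then (if (Weyl x).mulVec φ = φ then 1 else -1) else 0
  have hs : ∀ x ∈ L, s x = 1 ∨ s x = -1 := by
    intro x hx
    simp only [s, if_pos hx]
    split_ifs <;> simp
  have hs0 : ∀ x ∉ L, s x = 0 := fun x hx => by simp only [s, if_neg hx]
  have he : ∀ x ∈ L, (Weyl x).mulVec φ = (s x : ℂ) • φ := by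
    intro x hx
    simp only [s, if_pos hx]
    split_ifs with h
    · simp [h]
    · rcases hφe x hx with h' | h'
      · exact absurd h' h
      · simp [h']
  have hs1 : s 0 = 1 := by
    simp only [s, if_pos h0L]
    rw [if_pos]
    rw [Weyl_zero, Matrix.one_mulVec]
  -- translates
  let ψ : PhaseSpace n → (Fin n → ZMod 2) → ℂ := fun a => (Weyl a).mulVec φ
  let sa : PhaseSpace n → PhaseSpace n → ℝ := fun a x => qch (sympl x a) * s x
  have hψ : ∀ a, star (ψ a) ⬝ᵥ ψ a = 1 := by
    intro a
    simp only [ψ]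
    rw [Weyl_adj, Weyl_sq, hφ]
  have hsa : ∀ a, ∀ x ∈ L, sa a x = 1 ∨ sa a x = -1 := by
    intro a x hx
    rcases hs x hx with h | h <;> rcases qch_cases (sympl x a) with h' | h' <;>
      simp [sa, h, h']
  have hsa0 : ∀ a, ∀ x ∉ L, sa a x = 0 := fun a x hx => by simp [sa, hs0 x hx]
  have hea : ∀ a, ∀ x ∈ L, (Weyl x).mulVec (ψ a) = (sa a x : ℂ) • ψ a := by
    intro a x hx
    simp only [ψ, sa]
    rw [Weyl_comm, he x hx, Matrix.mulVec_smul, smul_smul]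
    push_cast
    rfl
  let f : PhaseSpace n → ℝ := fun a => ((ρ * outer (ψ a)).trace).re
  let g : PhaseSpace n → ℝ := fun x => s x * (Weyl x * ρ).trace.re
  have hf : ∀ a, 2 ^ n * f a = ∑ x, qch (sympl x a) * g x := by
    intro a
    have h := Weyl_complete ρ (outer (ψ a))
    simp only [stab_exp L hLag (ψ a) (hψ a) (sa a) (hsa a) (hsa0 a) (hea a)] at h
    have h2 := congrArg Complex.re h
    rw [Complex.re_sum] at h2
    have h3 : ((2 : ℂ) ^ n * (ρ * outer (ψ a)).trace).re = 2 ^ n * f a := by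
      have : ((2 : ℂ) ^ n) = ((2 ^ n : ℝ) : ℂ) := by push_cast; rfl
      rw [this, Complex.re_ofReal_mul]
    rw [h3] at h2
    rw [← h2]
    refine Finset.sum_congr rfl fun x _ => ?_
    rw [Complex.re_mul_ofReal]
    simp only [sa, g]
    ring
  have hf0 : ∀ a, 0 ≤ f a := by
    intro a
    simp only [f]
    rw [trace_outer]
    exact (Complex.le_def.1 (hρ.dotProduct_mulVec_nonneg (ψ a))).1
  have h2n : (0 : ℝ) < 2 ^ n := by positivity
  have h4 : (4 : ℝ) ^ n = 2 ^ n * 2 ^ n := by rw [← mul_pow]; norm_num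
  have hsum : ∑ a, f a = 2 ^ n := by
    have h : 2 ^ n * ∑ a, f a = 4 ^ n * g 0 := by
      rw [Finset.mul_sum]
      simp only [hf]
      rw [Finset.sum_comm]
      simp only [← Finset.sum_mul, qorth2]
      simp
    have hg : g 0 = 1 := by simp [g, hs1, Weyl_zero, hτ]
    rw [hg, h4, mul_one] at h
    exact mul_left_cancel₀ h2n.ne' h
  have hxy : ∀ x y : PhaseSpace n, x + y = 0 ↔ y = x := by
    intro x y
    have hx : x + x = 0 := Prod.ext (qtwo _) (qtwo _)
    constructor
    · intro h
      exact (add_left_cancel (h.trans hx.symm))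
    · rintro rfl; exact hx
  have hsq : ∑ a, f a ^ 2 = ∑ x, g x ^ 2 := by
    have h : 4 ^ n * ∑ a, f a ^ 2 = 4 ^ n * ∑ x, g x ^ 2 := by
      have e1 : ∀ a, 4 ^ n * f a ^ 2 = ∑ x, ∑ y, qch (sympl (x + y) a) * (g x * g y) := by
        intro a
        have : 4 ^ n * f a ^ 2 = (2 ^ n * f a) * (2 ^ n * f a) := by rw [h4]; ring
        rw [this, hf, Finset.sum_mul_sum]
        refine Finset.sum_congr rfl fun x _ => Finset.sum_congr rfl fun y _ => ?_
        rw [sympl_add_left, qch_add]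
        ring
      rw [Finset.mul_sum, Finset.mul_sum]
      simp only [e1]
      rw [Finset.sum_comm]
      refine Finset.sum_congr rfl fun x _ => ?_
      rw [Finset.sum_comm]
      simp only [← Finset.sum_mul, qorth2, hxy]
      simp [sq]
    exact mul_left_cancel₀ (by positivity) h
  have hP : ∑ x, g x ^ 2 = 2 ^ n * ∑ x, L.indicator (pFun ρ) x := by
    rw [Finset.mul_sum]
    refine Finset.sum_congr rfl fun x _ => ?_
    by_cases hx : x ∈ L
    · rw [Set.indicator_of_mem hx, pFun, mul_div_cancel₀ _ h2n.ne']
      rcases hs x hx with h | h <;> simp [g, h]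
    · rw [Set.indicator_of_notMem hx]
      simp [g, hs0 x hx]
  obtain ⟨a, -, ha⟩ := Finset.exists_max_image Finset.univ f ⟨0, Finset.mem_univ _⟩
  obtain ⟨h1, h2⟩ := stab_fin L hLag (ψ a) (hψ a) (sa a) (hsa a) (hsa0 a) (hea a)
  refine ⟨ψ a, h1, h2, ?_⟩
  have hle : ∑ b, f b ^ 2 ≤ f a * ∑ b, f b := by
    rw [Finset.mul_sum]
    refine Finset.sum_le_sum fun b _ => ?_
    rw [sq]
    exact mul_le_mul_of_nonneg_right (ha b (Finset.mem_univ _)) (hf0 b)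
  rw [hsq, hP, hsum, mul_comm (f a)] at hle
  exact le_of_mul_le_mul_left hle h2n
end

section
/- There exist universal constants c₁, c₂ > 0 such that the following holds. Let f : 𝔽₂^{2n} → ℝ satisfy 0 ≤ f(x) ≤ 2^{-n} for all x and Σ_{x ∈ 𝔽₂^{2n}} f(x) ≤ 1, and suppose 2^n · Σ_{x,y ∈ 𝔽₂^{2n}} f(x) f(y) f(x+y) ≥ γ for some γ > 0. Then there exists a linear subspace V ⊆ 𝔽₂^{2n} and a point z ∈ 𝔽₂^{2n} such that (2^n/|V|) · Σ_{x ∈ V} f(x+z) ≥ c₁ · γ^{366} and |V| ≥ c₂ · γ^{367} · 2^n. -/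
open scoped BigOperators ComplexOrder

set_option linter.unusedSectionVars false
set_option linter.unusedSimpArgs false
set_option linter.unusedVariables false

namespace PFR
open Finset


noncomputable def Hh {α : Type*} [Fintype α] (p : α → ℝ) : ℝ := ∑ a, Real.negMulLog (p a)

noncomputable def law {Ω α : Type*} [Fintype Ω] [DecidableEq α] (w : Ω → ℝ) (X : Ω → α) : α → ℝ :=
  fun a => ∑ ω, if X ω = a then w ω else 0

structure IsP {α : Type*} [Fintype α] (p : α → ℝ) : Prop where
  nn : ∀ a, 0 ≤ p a
  sm : ∑ a, p a = 1

noncomputable def tens {α β : Type*} (p : α → ℝ) (q : β → ℝ) : α × β → ℝ := fun x => p x.1 * q x.2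

noncomputable def ent {Ω α : Type*} [Fintype Ω] [Fintype α] [DecidableEq α]
    (w : Ω → ℝ) (X : Ω → α) : ℝ := Hh (law w X)

section basic
variable {Ω Ω' α β ζ : Type*} [Fintype Ω] [Fintype Ω'] [Fintype α] [Fintype β] [Fintype ζ]
  [DecidableEq Ω] [DecidableEq Ω'] [DecidableEq α] [DecidableEq β] [DecidableEq ζ]

lemma sum_law (w : Ω → ℝ) (X : Ω → α) (φ : α → ℝ) :
    ∑ a, law w X a * φ a = ∑ ω, w ω * φ (X ω) := by
  simp only [law, Finset.sum_mul]
  rw [Finset.sum_comm]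
  refine Finset.sum_congr rfl fun ω _ => ?_
  simp [ite_mul]

lemma law_isP {w : Ω → ℝ} (hw : IsP w) (X : Ω → α) : IsP (law w X) := by
  refine ⟨fun a => Finset.sum_nonneg fun ω _ => by split_ifs <;> simp [hw.nn], ?_⟩
  have := sum_law w X (fun _ => 1)
  simpa [hw.sm] using this

lemma tens_isP {p : α → ℝ} {q : β → ℝ} (hp : IsP p) (hq : IsP q) : IsP (tens p q) := by
  refine ⟨fun a => mul_nonneg (hp.nn _) (hq.nn _), ?_⟩
  simp only [tens, Fintype.sum_prod_type, ← Finset.mul_sum, hq.sm, mul_one, hp.sm]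

lemma law_apply_eq_sum (w : Ω → ℝ) (X : Ω → β) (b : β) :
    law w X b = ∑ ω, w ω * (if X ω = b then 1 else 0) := by
  simp [law]

lemma law_law (w : Ω → ℝ) (X : Ω → α) (f : α → β) : law (law w X) f = law w (fun ω => f (X ω)) := by
  funext b
  rw [law_apply_eq_sum, sum_law w X (fun a => if f a = b then 1 else 0), law_apply_eq_sum]

lemma law_id (w : Ω → ℝ) : law w (fun x => x) = w := by
  funext b; simp [law]

lemma law_tens (w₁ : Ω → ℝ) (w₂ : Ω' → ℝ) (X : Ω → α) (Y : Ω' → β) :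
    law (tens w₁ w₂) (fun x => (X x.1, Y x.2)) = tens (law w₁ X) (law w₂ Y) := by
  funext ⟨a, b⟩
  simp only [law, tens, Fintype.sum_prod_type, Finset.sum_mul_sum, Prod.mk.injEq]
  refine Finset.sum_congr rfl fun x _ => Finset.sum_congr rfl fun y _ => ?_
  by_cases h1 : X x = a <;> by_cases h2 : Y y = b <;> simp [h1, h2]

lemma law_fst (w₁ : Ω → ℝ) {w₂ : Ω' → ℝ} (h : IsP w₂) (X : Ω → α) :
    law (tens w₁ w₂) (fun x => X x.1) = law w₁ X := by
  funext a
  simp only [law, tens, Fintype.sum_prod_type]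
  refine Finset.sum_congr rfl fun x _ => ?_
  split_ifs
  · rw [← Finset.mul_sum, h.sm, mul_one]
  · simp

lemma law_snd {w₁ : Ω → ℝ} (w₂ : Ω' → ℝ) (h : IsP w₁) (X : Ω' → α) :
    law (tens w₁ w₂) (fun x => X x.2) = law w₂ X := by
  funext a
  simp only [law, tens, Fintype.sum_prod_type]
  rw [Finset.sum_comm]
  refine Finset.sum_congr rfl fun x _ => ?_
  split_ifs
  · rw [← Finset.sum_mul, h.sm, one_mul]
  · simp

/-- transport along an equivalence -/
lemma law_equiv (e : Ω ≃ Ω') (w : Ω → ℝ) (w' : Ω' → ℝ) (h : ∀ x, w x = w' (e x)) (X : Ω' → α) :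
    law w (fun x => X (e x)) = law w' X := by
  funext a
  simp only [law, h]
  exact Equiv.sum_comp e (fun y => if X y = a then w' y else 0)

lemma chainK (m : ζ → ℝ) (q : ζ → α → ℝ) (hq : ∀ z, IsP (q z)) (j : α × ζ → ℝ)
    (hj : ∀ a z, j (a, z) = m z * q z a) : Hh j = Hh m + ∑ z, m z * Hh (q z) := by
  simp only [Hh, Fintype.sum_prod_type_right, hj, Real.negMulLog_mul, Finset.sum_add_distrib,
    ← Finset.mul_sum, ← Finset.sum_mul, (hq _).sm, one_mul]

lemma Hh_tens {p : α → ℝ} {q : β → ℝ} (hp : IsP p) (hq : IsP q) : Hh (tens p q) = Hh p + Hh q := by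
  rw [chainK q (fun _ => p) (fun _ => hp) (tens p q) (fun a z => by simp [tens, mul_comm]),
    ← Finset.sum_mul, hq.sm]; ring

lemma Hh_law_inj (p : α → ℝ) (f : α → β) (hf : Function.Injective f) : Hh (law p f) = Hh p := by
  have h1 : ∀ a, law p f (f a) = p a := fun a => by simp [law, hf.eq_iff]
  have h2 : ∀ b ∉ Finset.univ.image f, law p f b = 0 := fun b hb => by
    refine Finset.sum_eq_zero fun a _ => if_neg fun h => hb ?_
    simp [← h]
  unfold Hh
  rw [← Finset.sum_subset (Finset.subset_univ (Finset.univ.image f))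
    (fun b _ hb => by rw [h2 b hb]; simp), Finset.sum_image (fun a _ b _ h => hf h)]
  simp [h1]

lemma ent_inj (w : Ω → ℝ) (X : Ω → α) (f : α → β) (hf : Function.Injective f) :
    ent w (fun ω => f (X ω)) = ent w X := by
  rw [ent, ← law_law, Hh_law_inj _ _ hf, ent]

lemma ent_congr (w : Ω → ℝ) (X : Ω → α) (Y : Ω → β) (f : α → β) (g : β → α)
    (h1 : ∀ ω, f (X ω) = Y ω) (h2 : ∀ ω, g (Y ω) = X ω) : ent w X = ent w Y := by
  have e1 := ent_inj w X (fun x => (x, f x)) (fun a b h => (Prod.ext_iff.1 h).1)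
  have e2 := ent_inj w Y (fun y => (g y, y)) (fun a b h => (Prod.ext_iff.1 h).2)
  simp only [h1] at e1
  simp only [h2] at e2
  rw [← e1, ← e2]

lemma exists_cond {w : Ω → ℝ} (hw : IsP w) (X : Ω → α) (Z : Ω → ζ) :
    ∃ q : ζ → α → ℝ, (∀ z, IsP (q z)) ∧
      ∀ a z, law w (fun ω => (X ω, Z ω)) (a, z) = law w Z z * q z a := by
  have hm : ∀ z, ∑ a, law w (fun ω => (X ω, Z ω)) (a, z) = law w Z z := by
    intro z
    simp only [law]
    rw [Finset.sum_comm]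
    refine Finset.sum_congr rfl fun ω _ => ?_
    by_cases h : Z ω = z <;> simp [h]
  have hn := (law_isP hw (fun ω => (X ω, Z ω))).nn
  refine ⟨fun z => if law w Z z = 0 then law w X else
    fun a => law w (fun ω => (X ω, Z ω)) (a, z) / law w Z z, fun z => ?_, fun a z => ?_⟩
  · beta_reduce
    split_ifs with h
    · exact law_isP hw X
    · refine ⟨fun a => div_nonneg (hn _) ((law_isP hw Z).nn _), ?_⟩
      rw [← Finset.sum_div, hm, div_self h]
  · beta_reduce
    split_ifs with h
    · have := hm z
      rw [h, Finset.sum_eq_zero_iff_of_nonneg (fun a _ => hn _)] at this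
      rw [this a (Finset.mem_univ _), h, zero_mul]
    · rw [mul_div_cancel₀ _ h]

lemma cond_map {w : Ω → ℝ} {X : Ω → α} {Z : Ω → ζ} {q : ζ → α → ℝ} {m : ζ → ℝ}
    (hq : ∀ a z, law w (fun ω => (X ω, Z ω)) (a, z) = m z * q z a) (f : α → β) :
    ∀ b z, law w (fun ω => (f (X ω), Z ω)) (b, z) = m z * law (q z) f b := by
  intro b z
  have := law_law w (fun ω => (X ω, Z ω)) (fun x : α × ζ => (f x.1, x.2))
  simp only at this
  rw [← this]
  rw [law_apply_eq_sum, Fintype.sum_prod_type, law_apply_eq_sum (q z), Finset.mul_sum]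
  refine Finset.sum_congr rfl fun a _ => ?_
  simp only [hq, Prod.mk.injEq]
  by_cases h : f a = b <;> simp [h]

lemma jensen (m : ζ → ℝ) (hm : IsP m) (q : ζ → α → ℝ) (hq : ∀ z a, 0 ≤ q z a) :
    ∑ z, m z * Hh (q z) ≤ Hh (fun a => ∑ z, m z * q z a) := by
  simp only [Hh, Finset.mul_sum]
  rw [Finset.sum_comm]
  refine Finset.sum_le_sum fun a _ => ?_
  have := Real.concaveOn_negMulLog.le_map_sum (t := Finset.univ) (w := m) (p := fun z => q z a)
    (fun z _ => hm.nn z) hm.sm (fun z _ => hq z a)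
  simpa using this

lemma sum_joint (w : Ω → ℝ) (X : Ω → α) (Z : Ω → ζ) (a : α) :
    ∑ z, law w (fun ω => (X ω, Z ω)) (a, z) = law w X a := by
  simp only [law]
  rw [Finset.sum_comm]
  refine Finset.sum_congr rfl fun ω _ => ?_
  by_cases h : X ω = a <;> simp [h]

lemma ent_eq_sum (w : Ω → ℝ) (X : Ω → α) :
    ent w X = ∑ ω, w ω * (- Real.log (law w X (X ω))) := by
  rw [← sum_law w X (fun a => - Real.log (law w X a))]
  simp [ent, Hh, Real.negMulLog]

lemma law_pos {w : Ω → ℝ} (hw : IsP w) (X : Ω → α) (ω : Ω) (h : 0 < w ω) : 0 < law w X (X ω) := by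
  refine lt_of_lt_of_le h ?_
  have := Finset.single_le_sum (f := fun x => if X x = X ω then w x else 0)
    (fun i _ => by split_ifs <;> simp [hw.nn]) (Finset.mem_univ ω)
  simpa [law] using this

lemma submod {w : Ω → ℝ} (hw : IsP w) (X : Ω → α) (Y : Ω → β) (Z : Ω → ζ) :
    ent w (fun ω => (X ω, Y ω, Z ω)) + ent w Z ≤
      ent w (fun ω => (X ω, Z ω)) + ent w (fun ω => (Y ω, Z ω)) := by
  set P := law w (fun ω => (X ω, Y ω, Z ω)) with hP
  set PX := law w (fun ω => (X ω, Z ω)) with hPX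
  set PY := law w (fun ω => (Y ω, Z ω)) with hPY
  set PZ := law w Z with hPZ
  have nP : ∀ a, 0 ≤ P a := (law_isP hw _).nn
  have nX : ∀ a, 0 ≤ PX a := (law_isP hw _).nn
  have nY : ∀ a, 0 ≤ PY a := (law_isP hw _).nn
  have nZ : ∀ a, 0 ≤ PZ a := (law_isP hw _).nn
  obtain ⟨qx, hqx, hx⟩ := exists_cond hw X Z
  obtain ⟨qy, hqy, hy⟩ := exists_cond hw Y Z
  have key : ∑ ω, w ω * (PX (X ω, Z ω) * PY (Y ω, Z ω) / (P (X ω, Y ω, Z ω) * PZ (Z ω))) ≤ 1 := by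
    have := sum_law w (fun ω => (X ω, Y ω, Z ω))
      (fun x => PX (x.1, x.2.2) * PY (x.2.1, x.2.2) / (P x * PZ x.2.2))
    simp only at this
    rw [← this]
    calc _ ≤ ∑ x : α × β × ζ, PZ x.2.2 * (qx x.2.2 x.1 * qy x.2.2 x.2.1) := by
          refine Finset.sum_le_sum fun x _ => ?_
          rw [hPX, hPY, hx, hy, ← hP, ← hPZ]
          have n0 : 0 ≤ PZ x.2.2 * (qx x.2.2 x.1 * qy x.2.2 x.2.1) :=
            mul_nonneg (nZ _) (mul_nonneg ((hqx _).nn _) ((hqy _).nn _))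
          rcases eq_or_ne (P x) 0 with h | h
          · simpa [h] using n0
          rcases eq_or_ne (PZ x.2.2) 0 with h' | h'
          · simp [h']
          · apply le_of_eq; field_simp
      _ = 1 := by
          rw [Fintype.sum_prod_type]
          simp only [Fintype.sum_prod_type]
          calc _ = ∑ z, PZ z * ((∑ a, qx z a) * (∑ b, qy z b)) := by
                rw [Finset.sum_congr rfl (fun a _ => Finset.sum_comm), Finset.sum_comm]
                refine Finset.sum_congr rfl fun z _ => ?_
                rw [Finset.sum_mul_sum, Finset.mul_sum]
                refine Finset.sum_congr rfl fun a _ => ?_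
                rw [Finset.mul_sum]
            _ = 1 := by simp only [(hqx _).sm, (hqy _).sm, mul_one]; exact (law_isP hw Z).sm
  rw [ent_eq_sum, ent_eq_sum w Z, ent_eq_sum w (fun ω => (X ω, Z ω)),
    ent_eq_sum w (fun ω => (Y ω, Z ω)), ← Finset.sum_add_distrib, ← Finset.sum_add_distrib,
    ← sub_nonneg, ← Finset.sum_sub_distrib]
  calc (0:ℝ) ≤ ∑ ω, (w ω - w ω * (PX (X ω, Z ω) * PY (Y ω, Z ω) / (P (X ω, Y ω, Z ω) * PZ (Z ω)))) := by
        rw [Finset.sum_sub_distrib, hw.sm]; linarith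
    _ ≤ _ := by
        refine Finset.sum_le_sum fun ω _ => ?_
        rcases (hw.nn ω).eq_or_lt with h | h
        · simp [← h]
        have a1 := law_pos hw (fun ω => (X ω, Y ω, Z ω)) ω h
        have a2 := law_pos hw (fun ω => (X ω, Z ω)) ω h
        have a3 := law_pos hw (fun ω => (Y ω, Z ω)) ω h
        have a4 := law_pos hw Z ω h
        have := Real.log_le_sub_one_of_pos (div_pos (mul_pos a2 a3) (mul_pos a1 a4))
        rw [Real.log_div (mul_pos a2 a3).ne' (mul_pos a1 a4).ne', Real.log_mul a2.ne' a3.ne',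
          Real.log_mul a1.ne' a4.ne'] at this
        have := mul_le_mul_of_nonneg_left this h.le
        simp only [hP, hPX, hPY, hPZ]
        linarith

lemma ent_const {w : Ω → ℝ} (hw : IsP w) : ent w (fun _ => ()) = 0 := by
  simp [ent, Hh, law, hw.sm]

lemma subadd {w : Ω → ℝ} (hw : IsP w) (X : Ω → α) (Y : Ω → β) :
    ent w (fun ω => (X ω, Y ω)) ≤ ent w X + ent w Y := by
  have h := submod hw X Y (fun _ => ())
  rw [ent_const hw] at h
  have e1 : ent w (fun ω => (X ω, Y ω, ())) = ent w (fun ω => (X ω, Y ω)) :=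
    ent_congr w _ _ (fun x => (x.1, x.2.1)) (fun x => (x.1, x.2, ())) (by simp) (by simp)
  have e2 : ent w (fun ω => (X ω, ())) = ent w X :=
    ent_congr w _ _ (fun x => x.1) (fun x => (x, ())) (by simp) (by simp)
  have e3 : ent w (fun ω => (Y ω, ())) = ent w Y :=
    ent_congr w _ _ (fun x => x.1) (fun x => (x, ())) (by simp) (by simp)
  linarith

lemma chain {w : Ω → ℝ} {X : Ω → α} {Z : Ω → ζ} {q : ζ → α → ℝ} 
    (hq : ∀ z, IsP (q z))
    (h : ∀ a z, law w (fun ω => (X ω, Z ω)) (a, z) = law w Z z * q z a) :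
    ∑ z, law w Z z * Hh (q z) = ent w (fun ω => (X ω, Z ω)) - ent w Z := by
  have := chainK _ q hq _ h
  simp only [ent]; linarith

end basic
end PFR

namespace PFR
open Finset


section grp
variable {G : Type*} [AddCommGroup G] [Fintype G] [DecidableEq G]
variable {Ω Ω' α β ζ ζ' : Type*} [Fintype Ω] [Fintype Ω'] [Fintype α] [Fintype β] [Fintype ζ] [Fintype ζ']
  [DecidableEq Ω] [DecidableEq Ω'] [DecidableEq α] [DecidableEq β] [DecidableEq ζ] [DecidableEq ζ']

noncomputable def cnv (p q : G → ℝ) : G → ℝ := law (tens p q) (fun x => x.1 + x.2)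

lemma cnv_isP {p q : G → ℝ} (hp : IsP p) (hq : IsP q) : IsP (cnv p q) := law_isP (tens_isP hp hq) _

lemma cnv_apply (p q : G → ℝ) (s : G) : cnv p q s = ∑ y, q y * p (s - y) := by
  simp only [cnv, law, tens, Fintype.sum_prod_type_right]
  refine Finset.sum_congr rfl fun y _ => ?_
  rw [Finset.sum_eq_single (s - y)]
  · simp [mul_comm]
  · intro x _ hx
    rw [if_neg]; rintro rfl; simp at hx
  · simp

lemma cnv_comm (p q : G → ℝ) : cnv p q = cnv q p := by
  have := law_equiv (Equiv.prodComm G G) (tens p q) (tens q p)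
    (fun x => by simp [tens, mul_comm]) (fun x => x.1 + x.2)
  rw [cnv, cnv, ← this]
  simp [add_comm]

lemma KV {p q r : G → ℝ} (hp : IsP p) (hq : IsP q) (hr : IsP r) :
    Hh (cnv p (cnv q r)) + Hh q ≤ Hh (cnv p q) + Hh (cnv q r) := by
  set w := tens p (tens q r) with hw
  have hwP : IsP w := tens_isP hp (tens_isP hq hr)
  have h := submod hwP (fun x => x.1) (fun x => x.2.2) (fun x => x.1 + (x.2.1 + x.2.2))
  have e1 : ent w (fun x => (x.1, x.2.2, x.1 + (x.2.1 + x.2.2))) = Hh p + Hh q + Hh r := by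
    rw [ent_congr w _ (fun x => x) (fun x => (x.1, x.2.2 - x.1 - x.2.1, x.2.1))
      (fun x => (x.1, x.2.2, x.1 + (x.2.1 + x.2.2))) (fun x => by ext <;> simp) (fun x => rfl)]
    rw [ent, law_id, hw, Hh_tens hp (tens_isP hq hr), Hh_tens hq hr]; ring
  have e2 : ent w (fun x => (x.1, x.1 + (x.2.1 + x.2.2))) = Hh p + Hh (cnv q r) := by
    rw [ent_congr w _ (fun x => (x.1, x.2.1 + x.2.2)) (fun x => (x.1, x.2 - x.1))
      (fun x => (x.1, x.1 + x.2)) (fun x => by ext <;> simp) (fun x => rfl)]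
    rw [ent, hw, law_tens p (tens q r) (fun x => x) (fun x => x.1 + x.2), law_id]
    exact Hh_tens hp (cnv_isP hq hr)
  have e3 : ent w (fun x => (x.2.2, x.1 + (x.2.1 + x.2.2))) = Hh (cnv p q) + Hh r := by
    rw [ent_congr w _ (fun x => (x.1 + x.2.1, x.2.2)) (fun x => (x.2 - x.1, x.1))
      (fun x => (x.2, x.1 + x.2)) (fun x => by ext <;> simp; abel) (fun x => by simp [add_assoc])]
    have := law_equiv (Equiv.prodAssoc G G G).symm w (tens (tens p q) r)
      (fun x => by simp [hw, tens, mul_assoc]) (fun x => (x.1.1 + x.1.2, x.2))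
    simp only [Equiv.prodAssoc_symm_apply] at this
    rw [ent, this, law_tens (tens p q) r (fun x => x.1 + x.2) (fun x => x), law_id]
    exact Hh_tens (cnv_isP hp hq) hr
  have e4 : ent w (fun x => x.1 + (x.2.1 + x.2.2)) = Hh (cnv p (cnv q r)) := by
    have := law_law w (fun x => (x.1, x.2.1 + x.2.2)) (fun x => x.1 + x.2)
    rw [ent, ← this, hw, law_tens p (tens q r) (fun x => x) (fun x => x.1 + x.2), law_id]; rfl
  linarith

lemma jensen_cond {w : Ω → ℝ} (hw : IsP w) {X : Ω → α} {Z : Ω → ζ} {q : ζ → α → ℝ}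
    (hq : ∀ z, IsP (q z))
    (h : ∀ a z, law w (fun ω => (X ω, Z ω)) (a, z) = law w Z z * q z a) :
    ∑ z, law w Z z * Hh (q z) ≤ ent w X := by
  refine (jensen _ (law_isP hw Z) q (fun z => (hq z).nn)).trans_eq ?_
  rw [ent]; congr 1; funext a
  rw [← sum_joint w X Z]; simp only [h]

lemma jensen_cnv {w : Ω → ℝ} (hw : IsP w) {p : G → ℝ} (hp : IsP p) {X : Ω → G} {Z : Ω → ζ}
    {q : ζ → G → ℝ} (hq : ∀ z, IsP (q z))
    (h : ∀ a z, law w (fun ω => (X ω, Z ω)) (a, z) = law w Z z * q z a) :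
    ∑ z, law w Z z * Hh (cnv p (q z)) ≤ Hh (cnv p (law w X)) := by
  refine (jensen _ (law_isP hw Z) _ (fun z => (cnv_isP hp (hq z)).nn)).trans_eq ?_
  congr 1; funext s
  simp only [cnv_apply, ← sum_joint w X Z, h, Finset.mul_sum, Finset.sum_mul]
  rw [Finset.sum_comm]
  simp only [mul_assoc]

/-- lower bound for the functional -/
def LB (η t : ℝ) (p0 : G → ℝ) : Prop := ∀ p q : G → ℝ, IsP p → IsP q →
  t ≤ Hh (cnv p q) - Hh p / 2 - Hh q / 2 +
    η * (Hh (cnv p0 p) + Hh (cnv p0 q) - Hh p / 2 - Hh q / 2 - Hh p0)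

lemma lemF {η t : ℝ} (hη : 0 ≤ η) {p0 : G → ℝ} (h0 : IsP p0) (hmin : LB η t p0)
    {w₁ : Ω → ℝ} {w₂ : Ω' → ℝ} (h1 : IsP w₁) (h2 : IsP w₂) (A : Ω → G) (B : Ω' → G)
    (Z₁ : Ω → ζ) (Z₂ : Ω' → ζ') :
    t ≤ (ent (tens w₁ w₂) (fun x => (A x.1 + B x.2, (Z₁ x.1, Z₂ x.2))) - ent w₁ Z₁ - ent w₂ Z₂)
      - (ent w₁ (fun x => (A x, Z₁ x)) - ent w₁ Z₁) / 2
      - (ent w₂ (fun x => (B x, Z₂ x)) - ent w₂ Z₂) / 2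
      + η * (Hh (cnv p0 (law w₁ A)) + Hh (cnv p0 (law w₂ B))
        - (ent w₁ (fun x => (A x, Z₁ x)) - ent w₁ Z₁) / 2
        - (ent w₂ (fun x => (B x, Z₂ x)) - ent w₂ Z₂) / 2 - Hh p0) := by
  obtain ⟨a, ha, ha'⟩ := exists_cond h1 A Z₁
  obtain ⟨b, hb, hb'⟩ := exists_cond h2 B Z₂
  have hw := tens_isP h1 h2
  have m1 := law_isP h1 Z₁
  have m2 := law_isP h2 Z₂
  have hZ : law (tens w₁ w₂) (fun x => (Z₁ x.1, Z₂ x.2)) = tens (law w₁ Z₁) (law w₂ Z₂) :=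
    law_tens _ _ _ _
  have hjoint : ∀ (ab : G × G) (z : ζ × ζ'),
      law (tens w₁ w₂) (fun x => ((A x.1, B x.2), (Z₁ x.1, Z₂ x.2))) (ab, z) =
      law (tens w₁ w₂) (fun x => (Z₁ x.1, Z₂ x.2)) z * tens (a z.1) (b z.2) ab := by
    intro ab z
    have e := law_law (tens w₁ w₂) (fun x => ((A x.1, Z₁ x.1), (B x.2, Z₂ x.2)))
      (fun y => ((y.1.1, y.2.1), (y.1.2, y.2.2)))
    simp only at e
    rw [← e, law_tens w₁ w₂ (fun x => (A x, Z₁ x)) (fun x => (B x, Z₂ x)), hZ]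
    have := law_equiv (Equiv.prodProdProdComm G ζ G ζ') (tens (law w₁ fun x => (A x, Z₁ x)) (law w₂ fun x => (B x, Z₂ x)))
      (fun y => (law w₁ fun x => (A x, Z₁ x)) (y.1.1, y.2.1) * (law w₂ fun x => (B x, Z₂ x)) (y.1.2, y.2.2))
      (fun x => by simp [tens]) (fun x => x)
    simp only [Equiv.prodProdProdComm_apply] at this
    rw [this, law_id]
    simp only [ha', hb', tens]; ring
  have hsum := cond_map hjoint (fun y => y.1 + y.2)
  have c1 := chain (fun z : ζ × ζ' => cnv_isP (ha z.1) (hb z.2)) hsum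
  have c2 := chain ha ha'
  have c3 := chain hb hb'
  have j1 := jensen_cnv h1 h0 ha ha'
  have j2 := jensen_cnv h2 h0 hb hb'
  have eZ : ent (tens w₁ w₂) (fun x => (Z₁ x.1, Z₂ x.2)) = ent w₁ Z₁ + ent w₂ Z₂ := by
    rw [ent, hZ, Hh_tens m1 m2]; rfl
  rw [eZ, hZ] at c1
  have main : ∑ z : ζ × ζ', tens (law w₁ Z₁) (law w₂ Z₂) z * t ≤
      ∑ z : ζ × ζ', tens (law w₁ Z₁) (law w₂ Z₂) z * (Hh (cnv (a z.1) (b z.2)) - Hh (a z.1) / 2 - Hh (b z.2) / 2 +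
    η * (Hh (cnv p0 (a z.1)) + Hh (cnv p0 (b z.2)) - Hh (a z.1) / 2 - Hh (b z.2) / 2 - Hh p0)) :=
    Finset.sum_le_sum fun z _ => mul_le_mul_of_nonneg_left (hmin _ _ (ha _) (hb _))
      ((tens_isP m1 m2).nn z)
  rw [← Finset.sum_mul, (tens_isP m1 m2).sm, one_mul] at main
  have f1 : ∀ φ : ζ → ℝ, ∑ z : ζ × ζ', tens (law w₁ Z₁) (law w₂ Z₂) z * φ z.1 = ∑ z, law w₁ Z₁ z * φ z := by
    intro φ
    simp only [tens, Fintype.sum_prod_type]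
    refine Finset.sum_congr rfl fun x _ => ?_
    rw [← Finset.sum_mul, ← Finset.mul_sum, m2.sm, mul_one]
  have f2 : ∀ φ : ζ' → ℝ, ∑ z : ζ × ζ', tens (law w₁ Z₁) (law w₂ Z₂) z * φ z.2 = ∑ z, law w₂ Z₂ z * φ z := by
    intro φ
    simp only [tens, Fintype.sum_prod_type_right]
    refine Finset.sum_congr rfl fun x _ => ?_
    rw [← Finset.sum_mul, ← Finset.sum_mul, m1.sm, one_mul]
  have g1 := f1 (fun z => Hh (a z))
  have g2 := f2 (fun z => Hh (b z))
  have g3 := f1 (fun z => Hh (cnv p0 (a z)))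
  have g4 := f2 (fun z => Hh (cnv p0 (b z)))
  have g5 := (tens_isP m1 m2).sm
  have expand : ∑ z : ζ × ζ', tens (law w₁ Z₁) (law w₂ Z₂) z * (Hh (cnv (a z.1) (b z.2)) - Hh (a z.1) / 2 - Hh (b z.2) / 2 +
    η * (Hh (cnv p0 (a z.1)) + Hh (cnv p0 (b z.2)) - Hh (a z.1) / 2 - Hh (b z.2) / 2 - Hh p0))
    = ∑ z : ζ × ζ', tens (law w₁ Z₁) (law w₂ Z₂) z * Hh (cnv (a z.1) (b z.2))
      - (∑ z, law w₁ Z₁ z * Hh (a z)) / 2 - (∑ z, law w₂ Z₂ z * Hh (b z)) / 2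
      + η * (∑ z, law w₁ Z₁ z * Hh (cnv p0 (a z)) + ∑ z, law w₂ Z₂ z * Hh (cnv p0 (b z))
      - (∑ z, law w₁ Z₁ z * Hh (a z)) / 2 - (∑ z, law w₂ Z₂ z * Hh (b z)) / 2 - Hh p0) := by
    rw [← g1, ← g2, ← g3, ← g4]
    conv_rhs => rw [← one_mul (Hh p0), ← g5]
    simp only [Finset.sum_mul, Finset.mul_sum, Finset.sum_div, ← Finset.sum_sub_distrib,
      ← Finset.sum_add_distrib]
    refine Finset.sum_congr rfl fun z _ => ?_
    ring
  have c1' : ∑ z : ζ × ζ', tens (law w₁ Z₁) (law w₂ Z₂) z * Hh (cnv (a z.1) (b z.2)) = _ := c1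
  rw [expand, c1', c2, c3] at main
  have := mul_le_mul_of_nonneg_left (add_le_add j1 j2) hη
  linarith

end grp
end PFR

namespace PFR
open Finset


section grp2
variable {G : Type*} [AddCommGroup G] [Fintype G] [DecidableEq G]
variable {Ω Ω' α β ζ ζ' : Type*} [Fintype Ω] [Fintype Ω'] [Fintype α] [Fintype β] [Fintype ζ] [Fintype ζ']
  [DecidableEq Ω] [DecidableEq Ω'] [DecidableEq α] [DecidableEq β] [DecidableEq ζ] [DecidableEq ζ']

lemma c2a (h2 : ∀ x : G, x + x = 0) (x y : G) : x + (x + y) = y := by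
  rw [← add_assoc, h2, zero_add]

lemma c2n (h2 : ∀ x : G, x + x = 0) (x : G) : -x = x := neg_eq_of_add_eq_zero_left (h2 x)

lemma c2s (h2 : ∀ x : G, x + x = 0) (x y : G) : x - y = x + y := by rw [sub_eq_add_neg, c2n h2]

/-- entropic Balog–Szemerédi–Gowers -/
lemma lemB (h2 : ∀ x : G, x + x = 0) {w : G × G → ℝ} (hw : IsP w) {a b : G → G → ℝ}
    (ha : ∀ z, IsP (a z)) (hb : ∀ z, IsP (b z))
    (ha' : ∀ x z, law w (fun x => (x.1, x.1 + x.2)) (x, z) = law w (fun x => x.1 + x.2) z * a z x)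
    (hb' : ∀ x z, law w (fun x => (x.2, x.1 + x.2)) (x, z) = law w (fun x => x.1 + x.2) z * b z x) :
    ∑ z, law w (fun x => x.1 + x.2) z * Hh (cnv (a z) (b z)) ≤
      2 * ent w Prod.fst + 2 * ent w Prod.snd - 2 * Hh w + ent w (fun x => x.1 + x.2) ∧
    ∑ z, law w (fun x => x.1 + x.2) z * Hh (a z) = Hh w - ent w (fun x => x.1 + x.2) ∧
    ∑ z, law w (fun x => x.1 + x.2) z * Hh (b z) = Hh w - ent w (fun x => x.1 + x.2) := by
  have sA : ∑ z, law w (fun x => x.1 + x.2) z * Hh (a z) = Hh w - ent w (fun x => x.1 + x.2) := by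
    rw [chain ha ha', ent_congr w _ (fun x => x) (fun x => (x.1, x.2 - x.1))
      (fun x => (x.1, x.1 + x.2)) (fun x => by ext <;> simp) (fun x => rfl)]
    rw [ent, law_id]
  have sB : ∑ z, law w (fun x => x.1 + x.2) z * Hh (b z) = Hh w - ent w (fun x => x.1 + x.2) := by
    rw [chain hb hb', ent_congr w _ (fun x => x) (fun x => (x.2 - x.1, x.1))
      (fun x => (x.2, x.1 + x.2)) (fun x => by ext <;> simp) (fun x => rfl)]
    rw [ent, law_id]
  refine ⟨?_, sA, sB⟩
  set m := law w (fun x => x.1 + x.2) with hm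
  have hmP : IsP m := law_isP hw _
  set W : (G × G) × G → ℝ := fun x => m x.2 * tens (a x.2) (b x.2) x.1 with hW
  have hWP : IsP W := by
    refine ⟨fun x => mul_nonneg (hmP.nn _) ((tens_isP (ha _) (hb _)).nn _), ?_⟩
    simp only [hW, Fintype.sum_prod_type_right (f := fun x : (G × G) × G => m x.2 * tens (a x.2) (b x.2) x.1),
      ← Finset.mul_sum, (tens_isP (ha _) (hb _)).sm, mul_one, hmP.sm]
  have hWj : ∀ x z, law W (fun y => (y.1, y.2)) (x, z) = m z * tens (a z) (b z) x := by
    intro x z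
    have := law_id W
    simp only [Prod.mk.eta]
    rw [this]
  have lA : law W (fun y => (y.1.1, y.2)) = law w (fun x => (x.1, x.1 + x.2)) := by
    funext ⟨x, z⟩
    rw [cond_map hWj Prod.fst, ha']
    have := law_fst (a z) (hb z) (fun x => x)
    rw [law_id] at this
    exact congrArg (fun v => m z * v x) this
  have lB : law W (fun y => (y.1.2, y.2)) = law w (fun x => (x.2, x.1 + x.2)) := by
    funext ⟨x, z⟩
    rw [cond_map hWj Prod.snd, hb']
    have := law_snd (b z) (ha z) (fun x => x)
    rw [law_id] at this
    exact congrArg (fun v => m z * v x) this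
  have tA : ∀ f : G × G → G, ent W (fun y => f (y.1.1, y.2)) = ent w (fun x => f (x.1, x.1 + x.2)) := by
    intro f
    rw [ent, ← law_law W (fun y => (y.1.1, y.2)) f, lA, law_law]; rfl
  have tB : ∀ f : G × G → G, ent W (fun y => f (y.1.2, y.2)) = ent w (fun x => f (x.2, x.1 + x.2)) := by
    intro f
    rw [ent, ← law_law W (fun y => (y.1.2, y.2)) f, lB, law_law]; rfl
  have a1 := tA (fun x => x.1)
  have a2 := tA (fun x => x.2 - x.1)
  have b1 := tB (fun x => x.1)
  have b2 := tB (fun x => x.2 - x.1)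
  simp only [add_sub_cancel_left] at a2
  simp only [add_sub_cancel_right] at b2
  have hH : Hh W = ent w (fun x => x.1 + x.2) + 2 * (Hh w - ent w (fun x => x.1 + x.2)) := by
    rw [chainK m (fun z => tens (a z) (b z)) (fun z => tens_isP (ha z) (hb z)) W (fun _ _ => rfl)]
    simp only [Hh_tens (ha _) (hb _), mul_add, Finset.sum_add_distrib, sA, sB]
    rw [ent, ← hm]; ring
  have S := submod hWP (fun y => y.1.1) (fun y => y.2 - y.1.1) (fun y => y.1.1 + y.1.2)
  have e1 : ent W (fun y => (y.1.1, y.2 - y.1.1, y.1.1 + y.1.2)) = Hh W := by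
    rw [ent_congr W _ (fun x => x) (fun x => ((x.1, x.2.2 - x.1), x.2.1 + x.1))
      (fun y => (y.1.1, y.2 - y.1.1, y.1.1 + y.1.2)) (fun x => by ext <;> simp) (fun x => rfl)]
    rw [ent, law_id]
  have e2 : ent W (fun y => (y.1.1, y.1.1 + y.1.2)) ≤ ent W (fun y => y.1.1) + ent W (fun y => y.1.2) := by
    rw [ent_congr W _ (fun y => (y.1.1, y.1.2)) (fun x => (x.1, x.2 - x.1))
      (fun x => (x.1, x.1 + x.2)) (fun x => by ext <;> simp) (fun x => rfl)]
    exact subadd hWP _ _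
  have e3 : ent W (fun y => (y.2 - y.1.1, y.1.1 + y.1.2)) ≤
      ent W (fun y => y.2 - y.1.1) + ent W (fun y => y.2 - y.1.2) := by
    rw [ent_congr W _ (fun y => (y.2 - y.1.1, y.2 - y.1.2)) (fun x => (x.1, x.1 + x.2))
      (fun x => (x.1, x.1 + x.2)) (fun x => ?_) (fun x => ?_)]
    · exact subadd hWP _ _
    · simp only [c2s h2, Prod.mk.injEq, true_and]
      have := c2a h2 x.1.1 (x.2 + x.1.2)
      rw [← this]; abel
    · simp only [c2s h2, Prod.mk.injEq, true_and]
      have := c2a h2 x.2 (x.1.1 + x.1.2)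
      rw [← this]; abel
  have e4 : ∑ z, m z * Hh (cnv (a z) (b z)) ≤ ent W (fun y => y.1.1 + y.1.2) := by
    have mm : law W (fun y => y.2) = m := by
      rw [← law_law W (fun y => (y.1.1, y.2)) (fun x => x.2), lA, law_law]
    have := cond_map hWj (fun x => x.1 + x.2)
    rw [← mm] at this ⊢
    exact jensen_cond hWP (fun z => cnv_isP (ha z) (hb z)) this
  have r1 : ent w (fun x => x.1) = ent w Prod.fst := rfl
  have r2 : ent w (fun x => x.2) = ent w Prod.snd := rfl
  linarith

lemma lemE (h2 : ∀ x : G, x + x = 0) {η t : ℝ} (hη : 0 ≤ η) {p0 : G → ℝ} (h0 : IsP p0)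
    (hmin : LB η t p0) {w : G × G → ℝ} (hw : IsP w) :
    t ≤ 2 * ent w Prod.fst + 2 * ent w Prod.snd - 3 * Hh w + 2 * ent w (fun x => x.1 + x.2)
      + η * (Hh (cnv p0 (law w Prod.fst)) + Hh (cnv p0 (law w Prod.snd)) - Hh w
        + ent w (fun x => x.1 + x.2) - Hh p0) := by
  obtain ⟨a, ha, ha'⟩ := exists_cond hw Prod.fst (fun x => x.1 + x.2)
  obtain ⟨b, hb, hb'⟩ := exists_cond hw Prod.snd (fun x => x.1 + x.2)
  obtain ⟨B1, B2, B3⟩ := lemB h2 hw ha hb ha' hb'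
  have j1 := jensen_cnv hw h0 ha ha'
  have j2 := jensen_cnv hw h0 hb hb'
  set m := law w (fun x => x.1 + x.2) with hm
  have hmP : IsP m := law_isP hw _
  have main : ∑ z, m z * t ≤
      ∑ z, m z * (Hh (cnv (a z) (b z)) - Hh (a z) / 2 - Hh (b z) / 2 +
    η * (Hh (cnv p0 (a z)) + Hh (cnv p0 (b z)) - Hh (a z) / 2 - Hh (b z) / 2 - Hh p0)) :=
    Finset.sum_le_sum fun z _ => mul_le_mul_of_nonneg_left (hmin _ _ (ha _) (hb _)) (hmP.nn z)
  rw [← Finset.sum_mul, hmP.sm, one_mul] at main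
  have expand : ∑ z, m z * (Hh (cnv (a z) (b z)) - Hh (a z) / 2 - Hh (b z) / 2 +
    η * (Hh (cnv p0 (a z)) + Hh (cnv p0 (b z)) - Hh (a z) / 2 - Hh (b z) / 2 - Hh p0))
    = ∑ z, m z * Hh (cnv (a z) (b z)) - (∑ z, m z * Hh (a z)) / 2 - (∑ z, m z * Hh (b z)) / 2
      + η * (∑ z, m z * Hh (cnv p0 (a z)) + ∑ z, m z * Hh (cnv p0 (b z))
      - (∑ z, m z * Hh (a z)) / 2 - (∑ z, m z * Hh (b z)) / 2 - Hh p0) := by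
    conv_rhs => rw [← one_mul (Hh p0), ← hmP.sm]
    simp only [Finset.sum_mul, Finset.mul_sum, Finset.sum_div, ← Finset.sum_sub_distrib,
      ← Finset.sum_add_distrib]
    refine Finset.sum_congr rfl fun z _ => ?_
    ring
  rw [expand, B2, B3] at main
  have := mul_le_mul_of_nonneg_left (add_le_add j1 j2) hη
  linarith

lemma lemE' (h2 : ∀ x : G, x + x = 0) {η t : ℝ} (hη : 0 ≤ η) {p0 : G → ℝ} (h0 : IsP p0)
    (hmin : LB η t p0) {w : Ω → ℝ} (hw : IsP w) (A B : Ω → G) (S : Ω → ζ) :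
    t ≤ 2 * (ent w (fun x => (A x, S x)) - ent w S) + 2 * (ent w (fun x => (B x, S x)) - ent w S)
      - 3 * (ent w (fun x => ((A x, B x), S x)) - ent w S)
      + 2 * (ent w (fun x => (A x + B x, S x)) - ent w S)
      + η * (Hh (cnv p0 (law w A)) + Hh (cnv p0 (law w B)) - ent w (fun x => ((A x, B x), S x))
        + ent w (fun x => (A x + B x, S x)) - Hh p0) := by
  obtain ⟨q, hq, hq'⟩ := exists_cond hw (fun x => (A x, B x)) S
  have qA := cond_map hq' Prod.fst
  have qB := cond_map hq' Prod.snd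
  have qS := cond_map hq' (fun x => x.1 + x.2)
  have cA := chain (fun z => law_isP (hq z) _) qA
  have cB := chain (fun z => law_isP (hq z) _) qB
  have cS := chain (fun z => law_isP (hq z) _) qS
  have cq := chain hq hq'
  have j1 := jensen_cnv hw h0 (fun z => law_isP (hq z) _) qA
  have j2 := jensen_cnv hw h0 (fun z => law_isP (hq z) _) qB
  set m := law w S with hm
  have hmP : IsP m := law_isP hw _
  have main := Finset.sum_le_sum (s := Finset.univ) fun z _ =>
    mul_le_mul_of_nonneg_left (lemE h2 hη h0 hmin (hq z)) (hmP.nn z)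
  rw [← Finset.sum_mul, hmP.sm, one_mul] at main
  have expand : ∑ z, m z * (2 * ent (q z) Prod.fst + 2 * ent (q z) Prod.snd - 3 * Hh (q z)
      + 2 * ent (q z) (fun x => x.1 + x.2)
      + η * (Hh (cnv p0 (law (q z) Prod.fst)) + Hh (cnv p0 (law (q z) Prod.snd)) - Hh (q z)
        + ent (q z) (fun x => x.1 + x.2) - Hh p0))
    = 2 * ∑ z, m z * Hh (law (q z) Prod.fst) + 2 * ∑ z, m z * Hh (law (q z) Prod.snd)
      - 3 * ∑ z, m z * Hh (q z) + 2 * ∑ z, m z * Hh (law (q z) (fun x => x.1 + x.2))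
      + η * (∑ z, m z * Hh (cnv p0 (law (q z) Prod.fst)) + ∑ z, m z * Hh (cnv p0 (law (q z) Prod.snd))
      - ∑ z, m z * Hh (q z) + ∑ z, m z * Hh (law (q z) (fun x => x.1 + x.2)) - Hh p0) := by
    conv_rhs => rw [← one_mul (Hh p0), ← hmP.sm]
    simp only [Finset.sum_mul, Finset.mul_sum, Finset.sum_div, ← Finset.sum_sub_distrib,
      ← Finset.sum_add_distrib, ent]
    refine Finset.sum_congr rfl fun z _ => ?_
    ring
  rw [expand, cA, cB, cS, cq] at main
  have := mul_le_mul_of_nonneg_left (add_le_add j1 j2) hη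
  linarith

lemma k_zero (h2 : ∀ x : G, x + x = 0) {t : ℝ} {p0 p1 p2 : G → ℝ} (h0 : IsP p0)
    (hp1 : IsP p1) (hp2 : IsP p2) (hmin : LB (1/14) t p0)
    (ht : t = Hh (cnv p1 p2) - Hh p1 / 2 - Hh p2 / 2 +
      1/14 * (Hh (cnv p0 p1) + Hh (cnv p0 p2) - Hh p1 / 2 - Hh p2 / 2 - Hh p0)) :
    Hh (cnv p1 p2) ≤ (Hh p1 + Hh p2) / 2 := by
  have h12 := cnv_isP hp1 hp2
  have h11 := cnv_isP hp1 hp1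
  have h22 := cnv_isP hp2 hp2
  have k1 := KV h0 hp1 hp2
  have k2 := KV h0 hp2 hp1
  rw [cnv_comm p2 p1] at k2
  have k3 := KV h0 hp1 hp1
  have k4 := KV h0 hp2 hp2
  have m1 := hmin _ _ h12 h12
  have m3 := hmin _ _ h11 h22
  have m4 := lemF (by norm_num) h0 hmin (tens_isP hp1 hp1) (tens_isP hp2 hp2) Prod.fst Prod.fst
    (fun x => x.1 + x.2) (fun x => x.1 + x.2)
  set w := tens (tens p1 p1) (tens p2 p2) with hw
  have hwP : IsP w := tens_isP (tens_isP hp1 hp1) (tens_isP hp2 hp2)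
  have e1 := lemE' h2 (by norm_num) h0 hmin hwP (fun x => x.1.1 + x.2.1) (fun x => x.1.1 + x.2.2)
    (fun x => (x.1.1 + x.1.2) + (x.2.1 + x.2.2))
  -- evaluate
  have f1 : ∀ {p : G → ℝ}, IsP p → ent (tens p p) (fun x => (x.1, x.1 + x.2)) = 2 * Hh p := by
    intro p hp
    rw [ent_congr _ _ (fun x => x) (fun x => (x.1, x.2 - x.1))
      (fun x => (x.1, x.1 + x.2)) (fun x => by ext <;> simp) (fun x => rfl)]
    rw [ent, law_id, Hh_tens hp hp]; ring
  have f2 : ∀ {p : G → ℝ}, ent (tens p p) (fun x => x.1 + x.2) = Hh (cnv p p) := fun {p} => rfl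
  have f3 : ∀ {p : G → ℝ}, IsP p → law (tens p p) Prod.fst = p := by
    intro p hp
    have := law_fst p hp (fun x => x)
    rw [law_id] at this
    exact this
  rw [f1 hp1, f1 hp2, f2, f2, f3 hp1, f3 hp2] at m4
  -- permutations of w
  have t1 : law w (fun x => (x.1.1 + x.2.1, x.1.2 + x.2.2)) = tens (cnv p1 p2) (cnv p1 p2) := by
    have := law_equiv (Equiv.prodProdProdComm G G G G) w (tens (tens p1 p2) (tens p1 p2))
      (fun x => by simp [hw, tens]; ring) (fun x => (x.1.1 + x.1.2, x.2.1 + x.2.2))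
    simp only [Equiv.prodProdProdComm_apply] at this
    rw [this, law_tens (tens p1 p2) (tens p1 p2) (fun x => x.1 + x.2) (fun x => x.1 + x.2)]
    rfl
  have t2 : law w (fun x => (x.1.1 + x.2.2, x.1.2 + x.2.1)) = tens (cnv p1 p2) (cnv p1 p2) := by
    rw [← t1]
    have := law_equiv ((Equiv.refl (G × G)).prodCongr (Equiv.prodComm G G)) w w
      (fun x => by simp [hw, tens]; left; ring) (fun x => (x.1.1 + x.2.1, x.1.2 + x.2.2))
    simp at this
    exact this
  have t3 : law w (fun x => (x.1.1 + x.1.2, x.2.1 + x.2.2)) = tens (cnv p1 p1) (cnv p2 p2) := by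
    rw [hw, law_tens (tens p1 p1) (tens p2 p2) (fun x => x.1 + x.2) (fun x => x.1 + x.2)]
    rfl
  have E1 : ent w (fun x => (x.1.1 + x.2.1, (x.1.1 + x.1.2) + (x.2.1 + x.2.2))) = 2 * Hh (cnv p1 p2) := by
    rw [ent_congr w _ (fun x => (x.1.1 + x.2.1, x.1.2 + x.2.2)) (fun x => (x.1, x.2 - x.1))
      (fun x => (x.1, x.1 + x.2)) (fun x => by ext <;> simp; abel) (fun x => by ext <;> simp; abel)]
    rw [ent, t1, Hh_tens h12 h12]; ring
  have E2 : ent w (fun x => (x.1.1 + x.2.2, (x.1.1 + x.1.2) + (x.2.1 + x.2.2))) = 2 * Hh (cnv p1 p2) := by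
    rw [ent_congr w _ (fun x => (x.1.1 + x.2.2, x.1.2 + x.2.1)) (fun x => (x.1, x.2 - x.1))
      (fun x => (x.1, x.1 + x.2)) (fun x => by ext <;> simp; abel) (fun x => by ext <;> simp; abel)]
    rw [ent, t2, Hh_tens h12 h12]; ring
  have hUV : ∀ a b c : G, a + b + (a + c) = b + c := by
    intro a b c
    have := c2a h2 a (b + c)
    rw [← this]; abel
  have E3 : ent w (fun x => (x.1.1 + x.2.1 + (x.1.1 + x.2.2), (x.1.1 + x.1.2) + (x.2.1 + x.2.2)))
      = Hh (cnv p1 p1) + Hh (cnv p2 p2) := by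
    simp only [hUV]
    rw [ent_congr w _ (fun x => (x.1.1 + x.1.2, x.2.1 + x.2.2)) (fun x => (x.2 - x.1, x.1))
      (fun x => (x.2, x.1 + x.2)) (fun x => by ext <;> simp) (fun x => by ext <;> simp)]
    rw [ent, t3, Hh_tens h11 h22]
  have E4 : ent w (fun x => ((x.1.1 + x.2.1, x.1.1 + x.2.2), (x.1.1 + x.1.2) + (x.2.1 + x.2.2)))
      = ent w (fun x => (x.1.1 + x.2.1, (x.1.1 + x.1.2, x.2.1 + x.2.2))) := by
    refine ent_congr w _ _ (fun y => (y.1.1, (y.2 - (y.1.1 + y.1.2), y.1.1 + y.1.2)))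
      (fun y => ((y.1, y.1 + y.2.2), y.2.1 + y.2.2)) (fun x => ?_) (fun x => ?_)
    · simp only [hUV]; simp
    · simp only [Prod.mk.injEq, and_true, true_and]
      have := c2a h2 x.2.1 (x.1.1 + x.2.2)
      rw [← this]; abel
  have s1 : ent w (fun x => (x.1.1 + x.1.2) + (x.2.1 + x.2.2)) = Hh (cnv (cnv p1 p1) (cnv p2 p2)) := by
    rw [ent, ← law_law w (fun x => (x.1.1 + x.1.2, x.2.1 + x.2.2)) (fun x => x.1 + x.2), t3]; rfl
  have s2 : ent w (fun x => (x.1.1 + x.1.2) + (x.2.1 + x.2.2)) = Hh (cnv (cnv p1 p2) (cnv p1 p2)) := by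
    have : (fun x : (G × G) × (G × G) => (x.1.1 + x.1.2) + (x.2.1 + x.2.2)) =
      (fun x => (x.1.1 + x.2.1) + (x.1.2 + x.2.2)) := by funext x; abel
    rw [this, ent, ← law_law w (fun x => (x.1.1 + x.2.1, x.1.2 + x.2.2)) (fun x => x.1 + x.2), t1]; rfl
  have L1 : law w (fun x => x.1.1 + x.2.1) = cnv p1 p2 := by
    rw [← law_law w (fun x => (x.1.1 + x.2.1, x.1.2 + x.2.2)) (fun x => x.1), t1]
    have := law_fst (cnv p1 p2) h12 (fun x => x)
    rwa [law_id] at this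
  have L2 : law w (fun x => x.1.1 + x.2.2) = cnv p1 p2 := by
    rw [← law_law w (fun x => (x.1.1 + x.2.2, x.1.2 + x.2.1)) (fun x => x.1), t2]
    have := law_fst (cnv p1 p2) h12 (fun x => x)
    rwa [law_id] at this
  rw [E1, E2, E3, E4, L1, L2] at e1
  rw [← s2] at m1
  rw [← s1] at m3
  linarith

end grp2
end PFR

namespace PFR
open Finset


section grp3
variable {G : Type*} [AddCommGroup G] [Fintype G] [DecidableEq G]

lemma Hh_shift (p : G → ℝ) (y : G) : Hh (fun s => p (s - y)) = Hh p := by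
  simp only [Hh]
  exact Equiv.sum_comp (Equiv.subRight y) (fun s => Real.negMulLog (p s))

lemma Hh_le_cnv {p q : G → ℝ} (hp : IsP p) (hq : IsP q) : Hh p ≤ Hh (cnv p q) := by
  have := jensen q hq (fun y s => p (s - y)) (fun z a => hp.nn _)
  simp only [Hh_shift, ← Finset.sum_mul, hq.sm, one_mul] at this
  have e : cnv p q = fun a => ∑ z, q z * p (a - z) := by funext s; exact cnv_apply p q s
  rwa [e]

lemma shift_eq {p q : G → ℝ} (hp : IsP p) (hq : IsP q) (h : Hh (cnv p q) ≤ Hh p) :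
    ∀ y y' : G, q y ≠ 0 → q y' ≠ 0 → ∀ s, p (s - y) = p (s - y') := by
  have hle : ∀ s ∈ (Finset.univ : Finset G), ∑ y, q y * Real.negMulLog (p (s - y)) ≤ Real.negMulLog (cnv p q s) := by
    intro s _
    rw [cnv_apply]
    have := Real.concaveOn_negMulLog.le_map_sum (t := Finset.univ) (w := q) (p := fun y => p (s - y))
      (fun z _ => hq.nn z) hq.sm (fun z _ => hp.nn _)
    simpa using this
  have heq : ∑ s, ∑ y, q y * Real.negMulLog (p (s - y)) = ∑ s, Real.negMulLog (cnv p q s) := by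
    refine le_antisymm (Finset.sum_le_sum hle) (h.trans_eq ?_)
    rw [Finset.sum_comm]
    simp only [← Finset.mul_sum]
    have : ∀ y, ∑ s, Real.negMulLog (p (s - y)) = Hh p := fun y => Hh_shift p y
    simp only [this, ← Finset.sum_mul, hq.sm, one_mul]
  rw [Finset.sum_eq_sum_iff_of_le hle] at heq
  intro y y' hy hy' s
  have e := (heq s (Finset.mem_univ s)).symm
  rw [cnv_apply] at e
  have := (Real.strictConcaveOn_negMulLog.map_sum_eq_iff_of_nonneg (t := Finset.univ) (w := q)
    (p := fun y => p (s - y)) (fun z _ => hq.nn z) hq.sm (fun z _ => hp.nn _)).1 (by simpa using e)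
  exact this (Finset.mem_univ y) hy (Finset.mem_univ y') hy'

lemma Hh_le_log {α : Type*} [Fintype α] [DecidableEq α] {p : α → ℝ} (hp : IsP p) (T : Finset α)
    (h : ∀ x ∉ T, p x = 0) : Hh p ≤ Real.log (T.card) := by
  have hs : ∑ x ∈ T, p x = 1 := by
    rw [← hp.sm]; exact Finset.sum_subset (Finset.subset_univ _) (fun x _ hx => h x hx)
  have hT : T.Nonempty := by
    by_contra hT
    rw [Finset.not_nonempty_iff_eq_empty] at hT
    simp [hT] at hs
  have hc : (0:ℝ) < T.card := by exact_mod_cast hT.card_pos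
  have e : Hh p = ∑ x ∈ T, Real.negMulLog (p x) :=
    (Finset.sum_subset (Finset.subset_univ _) (fun x _ hx => by simp [h x hx])).symm
  have := Real.concaveOn_negMulLog.le_map_sum (t := T) (w := fun _ => (T.card : ℝ)⁻¹) (p := p)
      (fun z _ => by positivity) (by simp [hc.ne']) (fun z _ => hp.nn _)
  simp only [smul_eq_mul, ← Finset.mul_sum, hs, mul_one] at this
  rw [← e] at this
  rw [Real.negMulLog, Real.log_inv] at this
  have h3 := mul_le_mul_of_nonneg_left this hc.le
  rw [← mul_assoc, mul_inv_cancel₀ hc.ne', one_mul] at h3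
  refine h3.trans_eq ?_
  field_simp

lemma exists_ge {α : Type*} [Fintype α] {p : α → ℝ} (hp : IsP p) : ∃ x, Real.exp (- Hh p) ≤ p x := by
  by_contra! hc
  have h1 : ∃ x, p x ≠ 0 := by
    by_contra! h; have := hp.sm; simp [h] at this
  obtain ⟨x0, hx0⟩ := h1
  have key : ∀ x, p x ≠ 0 → p x * Hh p < Real.negMulLog (p x) := by
    intro x hx
    have hx' : 0 < p x := lt_of_le_of_ne (hp.nn x) hx.symm
    have := Real.log_lt_log hx' (hc x)
    rw [Real.log_exp] at this
    simp only [Real.negMulLog]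
    nlinarith
  have : ∑ x, p x * Hh p < ∑ x, Real.negMulLog (p x) := by
    refine Finset.sum_lt_sum (fun x _ => ?_) ⟨x0, Finset.mem_univ _, key x0 hx0⟩
    by_cases h : p x = 0
    · simp [h]
    · exact (key x h).le
  rw [← Finset.sum_mul, hp.sm, one_mul] at this
  exact lt_irrefl _ this

lemma exists_min {p0 : G → ℝ} (h0 : IsP p0) (η : ℝ) : ∃ p1 p2 : G → ℝ, IsP p1 ∧ IsP p2 ∧
    LB η (Hh (cnv p1 p2) - Hh p1 / 2 - Hh p2 / 2 +
      η * (Hh (cnv p0 p1) + Hh (cnv p0 p2) - Hh p1 / 2 - Hh p2 / 2 - Hh p0)) p0 := by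
  have hP : ∀ p : G → ℝ, p ∈ stdSimplex ℝ G ↔ IsP p := fun p => ⟨fun h => ⟨h.1, h.2⟩, fun h => ⟨h.1, h.2⟩⟩
  have hK := (isCompact_stdSimplex ℝ G).prod (isCompact_stdSimplex ℝ G)
  have cH : Continuous (fun p : G → ℝ => Hh p) := by
    unfold Hh
    exact continuous_finset_sum _ fun a _ => Real.continuous_negMulLog.comp (continuous_apply a)
  have cC : Continuous (fun x : (G → ℝ) × (G → ℝ) => cnv x.1 x.2) := by
    refine continuous_pi fun s => ?_
    simp only [cnv_apply]
    fun_prop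
  have c1 : Continuous (fun x : (G → ℝ) × (G → ℝ) => Hh (cnv x.1 x.2)) := cH.comp cC
  have c2 : Continuous (fun x : (G → ℝ) × (G → ℝ) => Hh (cnv p0 x.1)) :=
    c1.comp (continuous_const.prodMk continuous_fst)
  have c3 : Continuous (fun x : (G → ℝ) × (G → ℝ) => Hh (cnv p0 x.2)) :=
    c1.comp (continuous_const.prodMk continuous_snd)
  have c4 : Continuous (fun x : (G → ℝ) × (G → ℝ) => Hh x.1) := cH.comp continuous_fst
  have c5 : Continuous (fun x : (G → ℝ) × (G → ℝ) => Hh x.2) := cH.comp continuous_snd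
  have cF : Continuous (fun x : (G → ℝ) × (G → ℝ) => Hh (cnv x.1 x.2) - Hh x.1 / 2 - Hh x.2 / 2 +
      η * (Hh (cnv p0 x.1) + Hh (cnv p0 x.2) - Hh x.1 / 2 - Hh x.2 / 2 - Hh p0)) :=
    ((c1.sub (c4.div_const 2)).sub (c5.div_const 2)).add (continuous_const.mul
      ((((c2.add c3).sub (c4.div_const 2)).sub (c5.div_const 2)).sub continuous_const))
  obtain ⟨x, hx, hm⟩ := hK.exists_isMinOn
    (Set.Nonempty.prod ⟨p0, (hP _).2 h0⟩ ⟨p0, (hP _).2 h0⟩) cF.continuousOn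
  have hx' := Set.mem_prod.1 hx
  refine ⟨x.1, x.2, (hP _).1 hx'.1, (hP _).1 hx'.2, fun p q hp hq => ?_⟩
  have := isMinOn_iff.1 hm (p, q) (Set.mk_mem_prod ((hP _).2 hp) ((hP _).2 hq))
  exact this

theorem ePFR [Module (ZMod 2) G] {p0 : G → ℝ} (h0 : IsP p0) :
    ∃ (V : Submodule (ZMod 2) G) (z : G),
      Hh p0 - 32 * (Hh (cnv p0 p0) - Hh p0) ≤ Real.log (Nat.card V) ∧
      Nat.card V * Real.exp (- (Hh p0 + 32 * (Hh (cnv p0 p0) - Hh p0))) ≤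
        ∑ x, (V : Set G).indicator (fun y => p0 (y + z)) x := by
  classical
  have h2 : ∀ x : G, x + x = 0 := fun x => ZModModule.add_self x
  obtain ⟨p1, p2, hp1, hp2, hmin⟩ := exists_min h0 (1/14)
  have hk := k_zero h2 h0 hp1 hp2 hmin rfl
  have a0 := hmin p0 p0 h0 h0
  have a1 := Hh_le_cnv hp1 hp2
  have a2 := Hh_le_cnv hp2 hp1
  rw [cnv_comm] at a2
  have b1 := Hh_le_cnv h0 hp1
  have b2 := Hh_le_cnv h0 hp2
  have b3 := Hh_le_cnv hp1 h0
  have b4 := Hh_le_cnv hp2 h0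
  rw [cnv_comm] at b3 b4
  have hsh := shift_eq hp1 hp2 (by linarith)
  let V0 : AddSubgroup G :=
    { carrier := {v | ∀ x, p1 (x + v) = p1 x}
      zero_mem' := by simp
      add_mem' := fun {a b} ha hb x => by rw [← add_assoc, hb, ha]
      neg_mem' := fun {a} ha x => by rw [c2n h2]; exact ha x }
  let V : Submodule (ZMod 2) G := AddSubgroup.toZModSubmodule 2 V0
  have hV : ∀ v, v ∈ V ↔ ∀ x, p1 (x + v) = p1 x := fun v => Iff.rfl
  have hy0 : ∃ y, p2 y ≠ 0 := by
    by_contra! h; have := hp2.sm; simp [h] at this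
  obtain ⟨y0, hy0⟩ := hy0
  set T : Finset G := Finset.univ.filter (· ∈ V) with hT
  have hTc : Nat.card V = T.card := by
    rw [Nat.card_eq_fintype_card, Fintype.card_subtype]
  have hTpos : (0:ℝ) < T.card := by
    have : (0:G) ∈ T := by simp [hT]
    exact_mod_cast Finset.card_pos.2 ⟨_, this⟩
  have hlog : Hh p2 ≤ Real.log (T.card) := by
    have := Hh_le_log hp2 (T.image (fun v => y0 + v)) (fun x hx => by
      by_contra hne
      apply hx
      rw [Finset.mem_image]
      refine ⟨x - y0, ?_, by abel⟩
      simp only [hT, Finset.mem_filter, Finset.mem_univ, true_and]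
      rw [hV]
      intro s
      have := hsh y0 x hy0 hne (s + x)
      rw [add_sub_cancel_right] at this
      rw [← this]; congr 1; abel)
    rwa [Finset.card_image_of_injective _ (add_right_injective y0)] at this
  obtain ⟨x, hx⟩ := exists_ge (cnv_isP h0 hp1)
  have avg : ∑ y, p1 y * ∑ v ∈ T, p0 (v + (x - y)) = T.card * cnv p0 p1 x := by
    simp only [Finset.mul_sum]
    rw [Finset.sum_comm, ← nsmul_eq_mul, ← Finset.sum_const]
    refine Finset.sum_congr rfl fun v hv => ?_
    have hv' : ∀ x, p1 (x + v) = p1 x := (hV v).1 (by simpa [hT] using hv)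
    rw [cnv_apply, ← Equiv.sum_comp (Equiv.addRight v)]
    refine Finset.sum_congr rfl fun y _ => ?_
    simp only [Equiv.coe_addRight, hv']
    congr 2; abel
  have hex : ∃ y, T.card * cnv p0 p1 x ≤ ∑ v ∈ T, p0 (v + (x - y)) := by
    by_contra! hc
    have : ∑ y, p1 y * ∑ v ∈ T, p0 (v + (x - y)) < ∑ y, p1 y * (T.card * cnv p0 p1 x) := by
      have : ∃ y, p1 y ≠ 0 := by
        by_contra! h; have := hp1.sm; simp [h] at this
      obtain ⟨y1, hy1⟩ := this
      refine Finset.sum_lt_sum (fun y _ => mul_le_mul_of_nonneg_left (hc y).le (hp1.nn y))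
        ⟨y1, Finset.mem_univ _, mul_lt_mul_of_pos_left (hc y1) (lt_of_le_of_ne (hp1.nn _) hy1.symm)⟩
    rw [avg, ← Finset.sum_mul, hp1.sm, one_mul] at this
    exact lt_irrefl _ this
  obtain ⟨y, hy⟩ := hex
  refine ⟨V, x - y, ?_, ?_⟩
  · rw [hTc]; linarith
  · rw [hTc]
    have e : ∑ x_1, (V : Set G).indicator (fun y_1 => p0 (y_1 + (x - y))) x_1 =
        ∑ v ∈ T, p0 (v + (x - y)) := by
      rw [hT, Finset.sum_filter]
      rfl
    rw [e]
    refine le_trans (mul_le_mul_of_nonneg_left ?_ hTpos.le) hy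
    refine le_trans (Real.exp_le_exp.2 ?_) hx
    linarith

end grp3
end PFR

namespace PFR
open Finset


noncomputable def unif {α : Type*} [DecidableEq α] (T : Finset α) : α → ℝ :=
  fun x => if x ∈ T then (T.card : ℝ)⁻¹ else 0

section uni
variable {α : Type*} [Fintype α] [DecidableEq α]

lemma unif_isP {T : Finset α} (hT : T.Nonempty) : IsP (unif T) := by
  have hc : (0:ℝ) < T.card := by exact_mod_cast hT.card_pos
  refine ⟨fun a => by unfold unif; split_ifs <;> positivity, ?_⟩
  simp [unif, hc.ne']

lemma Hh_unif {T : Finset α} (hT : T.Nonempty) : Hh (unif T) = Real.log T.card := by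
  have hc : (0:ℝ) < T.card := by exact_mod_cast hT.card_pos
  have : ∀ x, Real.negMulLog (unif T x) = if x ∈ T then Real.negMulLog ((T.card : ℝ)⁻¹) else 0 := by
    intro x; unfold unif; split_ifs <;> simp
  simp only [Hh, this, Finset.sum_ite_mem, Finset.univ_inter, Finset.sum_const, nsmul_eq_mul]
  rw [Real.negMulLog, Real.log_inv]
  field_simp

lemma pick {P F : α → ℝ} (hP : IsP P) {c : ℝ} (h : ∑ z, P z * F z ≤ c) : ∃ z, P z ≠ 0 ∧ F z ≤ c := by
  by_contra! hc
  have h1 : ∃ x, P x ≠ 0 := by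
    by_contra! h; have := hP.sm; simp [h] at this
  obtain ⟨x0, hx0⟩ := h1
  have key : ∀ x, P x ≠ 0 → P x * c < P x * F x := fun x hx =>
    mul_lt_mul_of_pos_left (hc x hx) (lt_of_le_of_ne (hP.nn x) hx.symm)
  have : ∑ x, P x * c < ∑ x, P x * F x := by
    refine Finset.sum_lt_sum (fun x _ => ?_) ⟨x0, Finset.mem_univ _, key x0 hx0⟩
    by_cases h : P x = 0
    · simp [h]
    · exact (key x h).le
  rw [← Finset.sum_mul, hP.sm, one_mul] at this
  linarith

end uni

section bsg
variable {G : Type*} [AddCommGroup G] [Fintype G] [DecidableEq G]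

lemma law_zero {w : G × G → ℝ} (hw : IsP w) (X : G × G → G) (T : Finset G)
    (h : ∀ x, w x ≠ 0 → X x ∈ T) : ent w X ≤ Real.log T.card := by
  refine Hh_le_log (law_isP hw X) T fun a ha => ?_
  unfold law
  refine Finset.sum_eq_zero fun ω _ => ?_
  split_ifs with hX
  · by_contra hne
    exact ha (hX ▸ h ω hne)
  · rfl

theorem bsg (h2 : ∀ x : G, x + x = 0) (A : Finset G) (T : Finset (G × G))
    (hT : ∀ x, x ∈ T ↔ x.1 ∈ A ∧ x.2 ∈ A ∧ x.1 + x.2 ∈ A) (hne : T.Nonempty) (l L : ℝ)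
    (hA : Real.log A.card ≤ l + L) (hTl : 2 * l - L ≤ Real.log T.card) :
    ∃ S : Finset G, S ⊆ A ∧ S.Nonempty ∧
      Hh (cnv (unif S) (unif S)) - Hh (unif S) ≤ 10 * L ∧ l - 29 * L ≤ Real.log S.card := by
  have hAne : A.Nonempty := by
    obtain ⟨x, hx⟩ := hne
    exact ⟨x.1, ((hT x).1 hx).1⟩
  have hTc : (0:ℝ) < T.card := by exact_mod_cast hne.card_pos
  set w : G × G → ℝ := unif T with hwd
  have hw : IsP w := unif_isP hne
  let S : G → Finset G := fun z => A.filter (fun x => x + z ∈ A)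
  let a : G → G → ℝ := fun z => if (S z).Nonempty then unif (S z) else unif A
  have ha : ∀ z, IsP (a z) := fun z => by
    simp only [a]; split_ifs with h
    · exact unif_isP h
    · exact unif_isP hAne
  have hwv : ∀ x z, w (x, x + z) = if z ∈ A then (if x ∈ S z then (T.card : ℝ)⁻¹ else 0) else 0 := by
    intro x z
    simp only [hwd, unif, hT, c2a h2, S, Finset.mem_filter]
    by_cases h1 : z ∈ A <;> by_cases h3 : x ∈ A <;> by_cases h4 : x + z ∈ A <;> simp [h1, h3, h4]
  have hws : ∀ x z, w (x + z, x) = w (x, x + z) := by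
    intro x z
    have e : x + z + x = z := by rw [add_comm, c2a h2]
    simp only [hwd, unif, hT, c2a h2, e]
    congr 1
    rw [eq_iff_iff]; tauto
  have hsum : ∀ z, law w (fun x => x.1 + x.2) z = ∑ x, w (x, x + z) := by
    intro z
    simp only [law, Fintype.sum_prod_type]
    refine Finset.sum_congr rfl fun x _ => ?_
    rw [Finset.sum_eq_single (x + z)]
    · simp [c2a h2]
    · intro y _ hy
      rw [if_neg]
      rintro rfl
      exact hy (c2a h2 x y).symm
    · simp
  have hp1 : ∀ x z, law w (fun x => (x.1, x.1 + x.2)) (x, z) = w (x, x + z) := by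
    intro x z
    simp only [law]
    rw [Finset.sum_eq_single (x, x + z)]
    · simp [c2a h2]
    · rintro ⟨u, v⟩ _ hy
      rw [if_neg]
      intro h
      simp only [Prod.mk.injEq] at h
      obtain ⟨rfl, rfl⟩ := h
      exact hy (by rw [c2a h2])
    · simp
  have hp2 : ∀ x z, law w (fun x => (x.2, x.1 + x.2)) (x, z) = w (x + z, x) := by
    intro x z
    simp only [law]
    rw [Finset.sum_eq_single (x + z, x)]
    · have e : x + z + x = z := by rw [add_comm, c2a h2]
      simp [e]
    · rintro ⟨u, v⟩ _ hy
      rw [if_neg]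
      intro h
      simp only [Prod.mk.injEq] at h
      obtain ⟨rfl, rfl⟩ := h
      exact hy (by rw [add_comm u v, c2a h2])
    · simp
  have hker : ∀ x z, w (x, x + z) = (∑ x, w (x, x + z)) * a z x := by
    intro x z
    simp only [hwv]
    by_cases hz : z ∈ A
    · simp only [hz, if_true, Finset.sum_ite_mem, Finset.univ_inter, Finset.sum_const, nsmul_eq_mul, a]
      by_cases hS : (S z).Nonempty
      · have hc : (0:ℝ) < (S z).card := by exact_mod_cast hS.card_pos
        simp only [hS, if_true, unif]
        split_ifs
        · field_simp
        · simp
      · rw [Finset.not_nonempty_iff_eq_empty] at hS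
        simp [hS]
    · simp [hz]
  obtain ⟨B1, B2, _⟩ := lemB h2 hw ha ha (fun x z => by rw [hp1, hsum]; exact hker x z)
    (fun x z => by rw [hp2, hsum, hws]; exact hker x z)
  have hwT : ∀ x, w x ≠ 0 → x ∈ T := fun x hx => by
    by_contra h; exact hx (by simp [hwd, unif, h])
  have e1 := law_zero hw Prod.fst A (fun x hx => ((hT x).1 (hwT x hx)).1)
  have e2 := law_zero hw Prod.snd A (fun x hx => ((hT x).1 (hwT x hx)).2.1)
  have e3 := law_zero hw (fun x => x.1 + x.2) A (fun x hx => ((hT x).1 (hwT x hx)).2.2)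
  have e4 : Hh w = Real.log T.card := Hh_unif hne
  have hm : IsP (law w (fun x => x.1 + x.2)) := law_isP hw _
  have main : ∑ z, law w (fun x => x.1 + x.2) z *
      (Hh (cnv (a z) (a z)) - Hh (a z) + (l - Hh (a z)) / 3) ≤ 29 / 3 * L := by
    have : ∀ z, law w (fun x => x.1 + x.2) z *
      (Hh (cnv (a z) (a z)) - Hh (a z) + (l - Hh (a z)) / 3) =
      law w (fun x => x.1 + x.2) z * Hh (cnv (a z) (a z)) - 4 / 3 * (law w (fun x => x.1 + x.2) z * Hh (a z))
      + (l / 3) * law w (fun x => x.1 + x.2) z := fun z => by ring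
    simp only [this, Finset.sum_add_distrib, Finset.sum_sub_distrib, ← Finset.mul_sum, hm.sm, B2]
    linarith
  obtain ⟨z, hz, hF⟩ := pick hm main
  have hS : (S z).Nonempty := by
    by_contra hS
    rw [Finset.not_nonempty_iff_eq_empty] at hS
    apply hz
    rw [hsum]
    refine Finset.sum_eq_zero fun x _ => ?_
    rw [hwv]; simp [hS]
  have haz : a z = unif (S z) := by simp only [a, hS, if_true]
  rw [haz] at hF
  have hSA : S z ⊆ A := Finset.filter_subset _ _
  have q1 := Hh_le_cnv (unif_isP hS) (unif_isP hS)
  have q2 : Real.log (S z).card ≤ Real.log A.card :=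
    Real.log_le_log (by exact_mod_cast hS.card_pos) (by exact_mod_cast Finset.card_le_card hSA)
  have q3 := Hh_unif hS
  refine ⟨S z, hSA, hS, ?_, ?_⟩ <;> linarith

/-- Combinatorial core: dense triples. -/
theorem core [Module (ZMod 2) G] (N : ℝ) (hN : 0 < N) (f : G → ℝ) (γ : ℝ) (hγ : 0 < γ)
    (f0 : ∀ x, 0 ≤ f x) (f1 : ∀ x, f x ≤ 1 / N) (fs : ∑ x, f x ≤ 1)
    (h : γ ≤ N * ∑ x, ∑ y, f x * f y * f (x + y)) :
    ∃ (V : Submodule (ZMod 2) G) (z : G),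
      (γ / 4) ^ 321 * (Nat.card V / N) ≤ ∑ x, (V : Set G).indicator (fun y => f (y + z)) x ∧
      (γ / 4) ^ 349 * N ≤ Nat.card V ∧ γ ≤ 1 := by
  classical
  have h2 : ∀ x : G, x + x = 0 := fun x => ZModModule.add_self x
  have fs0 : 0 ≤ ∑ x, f x := Finset.sum_nonneg fun x _ => f0 x
  have ff : ∑ x, ∑ y, f x * f y ≤ 1 := by
    rw [← Finset.sum_mul_sum]; nlinarith
  have ff2 : ∑ x, ∑ y, f x * f (x + y) ≤ 1 := by
    have : ∀ x, ∑ y, f x * f (x + y) = ∑ y, f x * f y := fun x =>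
      Equiv.sum_comp (Equiv.addLeft x) (fun y => f x * f y)
    simpa only [this] using ff
  have ff3 : ∑ x, ∑ y, f y * f (x + y) ≤ 1 := by
    rw [Finset.sum_comm]
    have : ∀ y, ∑ x, f y * f (x + y) = ∑ x, f y * f x := fun y =>
      Equiv.sum_comp (Equiv.addRight y) (fun x => f y * f x)
    simpa only [this] using ff
  have g1 : γ ≤ 1 := by
    refine h.trans ?_
    have : ∑ x, ∑ y, f x * f y * f (x + y) ≤ ∑ x, ∑ y, f x * f y * (1 / N) :=
      Finset.sum_le_sum fun x _ => Finset.sum_le_sum fun y _ =>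
        mul_le_mul_of_nonneg_left (f1 _) (mul_nonneg (f0 _) (f0 _))
    simp only [← Finset.sum_mul] at this
    calc N * ∑ x, ∑ y, f x * f y * f (x + y) ≤ N * ((∑ x, ∑ y, f x * f y) * (1 / N)) :=
          mul_le_mul_of_nonneg_left this hN.le
      _ = ∑ x, ∑ y, f x * f y := by field_simp
      _ ≤ 1 := ff
  set δ : ℝ := γ / 4 / N with hδ
  have hδ0 : 0 < δ := by positivity
  set A : Finset G := Finset.univ.filter (fun x => δ ≤ f x) with hAd
  have hA : ∀ x, x ∈ A ↔ δ ≤ f x := fun x => by simp [hAd]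
  set T : Finset (G × G) := Finset.univ.filter (fun x => x.1 ∈ A ∧ x.2 ∈ A ∧ x.1 + x.2 ∈ A) with hTd
  have hT : ∀ x, x ∈ T ↔ x.1 ∈ A ∧ x.2 ∈ A ∧ x.1 + x.2 ∈ A := fun x => by simp [hTd]
  have cA : A.card * δ ≤ 1 := by
    refine le_trans ?_ fs
    calc A.card * δ = ∑ x ∈ A, δ := by simp
      _ ≤ ∑ x ∈ A, f x := Finset.sum_le_sum fun x hx => (hA x).1 hx
      _ ≤ ∑ x, f x := Finset.sum_le_sum_of_subset_of_nonneg (Finset.subset_univ _) fun x _ _ => f0 x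
  have cT : γ / 4 * N ^ 2 ≤ T.card := by
    have pt : ∀ x y, f x * f y * f (x + y) ≤ δ * (f x * f y) + δ * (f x * f (x + y))
        + δ * (f y * f (x + y)) + if (x, y) ∈ T then (1 / N) ^ 3 else 0 := by
      intro x y
      have a1 := f0 x
      have a2 := f0 y
      have a3 := f0 (x + y)
      have b12 := mul_nonneg a1 a2
      have b13 := mul_nonneg a1 a3
      have b23 := mul_nonneg a2 a3
      have d12 := mul_nonneg hδ0.le b12
      have d13 := mul_nonneg hδ0.le b13
      have d23 := mul_nonneg hδ0.le b23
      by_cases ht : (x, y) ∈ T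
      · rw [if_pos ht]
        have : f x * f y * f (x + y) ≤ 1 / N * (1 / N) * (1 / N) := by
          have hN' : 0 ≤ 1 / N := by positivity
          exact mul_le_mul (mul_le_mul (f1 _) (f1 _) a2 hN') (f1 _) a3 (by positivity)
        nlinarith
      · rw [if_neg ht]
        rw [hT] at ht
        simp only [hA] at ht
        by_cases k1 : δ ≤ f x
        · by_cases k2 : δ ≤ f y
          · have k3 : f (x + y) ≤ δ := by
              by_contra hc; exact ht ⟨k1, k2, (not_le.1 hc).le⟩
            nlinarith
          · have k2 := (not_le.1 k2).le
            nlinarith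
        · have k1 := (not_le.1 k1).le
          nlinarith
    have s := Finset.sum_le_sum fun x (_ : x ∈ (Finset.univ : Finset G)) =>
      Finset.sum_le_sum fun y (_ : y ∈ (Finset.univ : Finset G)) => pt x y
    simp only [Finset.sum_add_distrib, ← Finset.mul_sum] at s
    rw [← Fintype.sum_prod_type' (fun x y => if (x, y) ∈ T then (1 / N) ^ 3 else 0)] at s
    simp only [Prod.mk.eta, Finset.sum_ite_mem, Finset.univ_inter, Finset.sum_const, nsmul_eq_mul] at s
    have s2 : ∑ x, ∑ y, f x * f y * f (x + y) ≤ 3 * δ + T.card * (1 / N) ^ 3 := by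
      have t1 := mul_le_mul_of_nonneg_left ff hδ0.le
      have t2 := mul_le_mul_of_nonneg_left ff2 hδ0.le
      have t3 := mul_le_mul_of_nonneg_left ff3 hδ0.le
      simp only [← Finset.mul_sum] at t1 t2 t3
      linarith
    have s3 := h.trans (mul_le_mul_of_nonneg_left s2 hN.le)
    have s4 : N * (3 * δ + T.card * (1 / N) ^ 3) = 3 * (γ / 4) + T.card / N ^ 2 := by
      rw [hδ]; field_simp
    rw [s4] at s3
    have s5 : γ / 4 ≤ T.card / N ^ 2 := by linarith
    rwa [le_div_iff₀ (by positivity)] at s5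
  have hTpos : (0:ℝ) < T.card := lt_of_lt_of_le (by positivity) cT
  have hTne : T.Nonempty := Finset.card_pos.1 (by exact_mod_cast hTpos)
  have hAne : A.Nonempty := by
    obtain ⟨x, hx⟩ := hTne
    exact ⟨x.1, ((hT x).1 hx).1⟩
  have hApos : (0:ℝ) < A.card := by exact_mod_cast hAne.card_pos
  have hg4 : 0 < γ / 4 := by positivity
  set L : ℝ := - Real.log (γ / 4) with hL
  have hexp : ∀ k : ℕ, Real.exp (-(k * L)) = (γ / 4) ^ k := fun k => by
    rw [hL, show -((k:ℝ) * -Real.log (γ / 4)) = k * Real.log (γ / 4) by ring, Real.exp_nat_mul,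
      Real.exp_log hg4]
  have l1 : Real.log A.card ≤ Real.log N + L := by
    have : (A.card : ℝ) ≤ N / (γ / 4) := by
      rw [hδ] at cA
      rw [le_div_iff₀ hg4]
      have := mul_le_mul_of_nonneg_right cA hN.le
      rw [one_mul, mul_assoc, div_mul_cancel₀ _ hN.ne'] at this
      exact this
    have := Real.log_le_log hApos this
    rw [Real.log_div hN.ne' hg4.ne'] at this
    linarith
  have l2 : 2 * Real.log N - L ≤ Real.log T.card := by
    have := Real.log_le_log (by positivity) cT
    rw [Real.log_mul hg4.ne' (by positivity), Real.log_pow] at this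
    push_cast at this
    linarith
  obtain ⟨S, hSA, hSne, hD, hS⟩ := bsg h2 A T hT hTne _ L l1 l2
  have hSpos : (0:ℝ) < S.card := by exact_mod_cast hSne.card_pos
  obtain ⟨V, z, hV1, hV2⟩ := ePFR (unif_isP hSne)
  rw [Hh_unif hSne] at hV1 hV2 hD
  have hVpos : (0:ℝ) < Nat.card V := by exact_mod_cast Nat.card_pos
  refine ⟨V, z, ?_, ?_, g1⟩
  · have i1 : δ * S.card * ∑ x, (V : Set G).indicator (fun y => unif S (y + z)) x ≤
        ∑ x, (V : Set G).indicator (fun y => f (y + z)) x := by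
      rw [Finset.mul_sum]
      refine Finset.sum_le_sum fun x _ => ?_
      by_cases hx : x ∈ (V : Set G)
      · simp only [Set.indicator_of_mem hx, unif]
        split_ifs with hs
        · rw [mul_assoc, mul_inv_cancel₀ hSpos.ne', mul_one]
          exact (hA _).1 (hSA hs)
        · simpa using f0 _
      · simp [Set.indicator_of_notMem hx]
    refine le_trans ?_ i1
    refine le_trans ?_ (mul_le_mul_of_nonneg_left hV2 (by positivity))
    have i2 : Real.exp (-(Real.log S.card)) * (γ / 4) ^ 320 ≤ Real.exp (-(Real.log S.card +
        32 * (Hh (cnv (unif S) (unif S)) - Real.log S.card))) := by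
      rw [← hexp, ← Real.exp_add, Real.exp_le_exp]
      push_cast
      linarith
    rw [Real.exp_neg, Real.exp_log hSpos] at i2
    calc (γ / 4) ^ 321 * (Nat.card V / N)
        = δ * S.card * (Nat.card V * ((S.card : ℝ)⁻¹ * (γ / 4) ^ 320)) := by
          rw [hδ]; field_simp
      _ ≤ _ := by gcongr
  · have i3 : Real.log N - (349 : ℕ) * L ≤ Real.log (Nat.card V) := by push_cast; linarith
    have := Real.exp_le_exp.2 i3
    rw [Real.exp_log hVpos, sub_eq_add_neg, Real.exp_add, hexp, Real.exp_log hN] at this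
    linarith

end bsg
end PFR
/-- There are universal constants c₁, c₂ > 0 such that: if 0 ≤ f ≤ 2^{-n},
∑ f ≤ 1 and 2^n ∑_{x,y} f(x)f(y)f(x+y) ≥ γ > 0, then there exist a linear subspace
V ⊆ 𝔽₂^{2n} and z ∈ 𝔽₂^{2n} with (2^n/|V|) ∑_{x ∈ V} f(x+z) ≥ c₁ γ^{366}
and |V| ≥ c₂ γ^{367} 2^n. -/
theorem exists_affine_subspace :
    ∃ c₁ c₂ : ℝ, 0 < c₁ ∧ 0 < c₂ ∧
      ∀ (n : ℕ), 0 < n → ∀ (f : PhaseSpace n → ℝ) (γ : ℝ), 0 < γ →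
        (∀ x, 0 ≤ f x) → (∀ x, f x ≤ 1 / 2 ^ n) → (∑ x, f x ≤ 1) →
        γ ≤ 2 ^ n * ∑ x, ∑ y, f x * f y * f (x + y) →
        ∃ (V : Submodule (ZMod 2) (PhaseSpace n)) (z : PhaseSpace n),
          c₁ * γ ^ 366 ≤
            (2 ^ n / (Nat.card V : ℝ)) *
              ∑ x, (V : Set (PhaseSpace n)).indicator (fun y => f (y + z)) x ∧
          c₂ * γ ^ 367 * 2 ^ n ≤ (Nat.card V : ℝ) := by
  refine ⟨(1 / 4) ^ 366, (1 / 4) ^ 367, by positivity, by positivity, ?_⟩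
  intro n hn f γ hγ f0 f1 fs h
  obtain ⟨V, z, h1, h2, h3⟩ := PFR.core ((2:ℝ) ^ n) (by positivity) f γ hγ f0 f1 fs h
  have hVpos : (0:ℝ) < Nat.card V := by exact_mod_cast Nat.card_pos
  have g0 : 0 ≤ γ / 4 := by positivity
  have g1 : γ / 4 ≤ 1 := by linarith
  have m1 : (γ / 4) ^ 366 ≤ (γ / 4) ^ 321 := pow_le_pow_of_le_one g0 g1 (by norm_num)
  have m2 : (γ / 4) ^ 367 ≤ (γ / 4) ^ 349 := pow_le_pow_of_le_one g0 g1 (by norm_num)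
  have e : ∀ k : ℕ, ((1:ℝ) / 4) ^ k * γ ^ k = (γ / 4) ^ k := fun k => by
    rw [← mul_pow]; congr 1; ring
  refine ⟨V, z, ?_, ?_⟩
  · rw [e]
    refine m1.trans ?_
    have := mul_le_mul_of_nonneg_left h1 (show (0:ℝ) ≤ 2 ^ n / (Nat.card V : ℝ) by positivity)
    refine le_trans (le_of_eq ?_) this
    have hN : (2:ℝ) ^ n ≠ 0 := by positivity
    have hV := hVpos.ne'
    rw [mul_left_comm, div_mul_div_cancel₀ hV, div_self hN, mul_one]
  · rw [e]
    exact (mul_le_mul_of_nonneg_right m2 (by positivity)).trans h2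
end
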